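/- arXiv:1012.5152 — 2 statements merged into one kernel-verified Lean document; each statement's English description precedes it below -/
import Mathlib

section
/- The set { a ∈ H₀ : ∫_{Σ_A} a dμ = 0 and ‖D(a·h) − a·D(h)‖_{L²(μ)} ≤ ‖h‖_{L²(μ)} for all h ∈ H₀ } is totally bounded in the supremum norm on Σ_A. -/
open MeasureTheory Filter
open scoped ENNReal NNReal

namespace SFT

variable {l : ℕ}

/-- The one-sided subshift of finite type determined by the `l × l` matrix `A`:
infinite sequences with transitions allowed by `A`. -/
abbrev SigmaA (l : ℕ) (A : Matrix (Fin l) (Fin l) ℕ) : Type :=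
  {ω : ℕ → Fin l // ∀ k, A (ω k) (ω (k + 1)) = 1}

/-- The left shift `σ` on `SigmaA l A`. -/
def shift {A : Matrix (Fin l) (Fin l) ℕ} (ω : SigmaA l A) : SigmaA l A :=
  ⟨fun n => ω.1 (n + 1), fun k => ω.2 (k + 1)⟩

/-- Birkhoff sums `S_k φ = ∑_{m<k} φ ∘ σ^m`. -/
def birkhoff {A : Matrix (Fin l) (Fin l) ℕ} (φ : SigmaA l A → ℝ) (k : ℕ) (ω : SigmaA l A) : ℝ :=
  ∑ m ∈ Finset.range k, φ (shift^[m] ω)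

/-- The matrix `A` has `0`-`1` entries and is irreducible and aperiodic
(some power of `A` has all entries strictly positive). -/
def Primitive (A : Matrix (Fin l) (Fin l) ℕ) : Prop :=
  (∀ i j, A i j = 0 ∨ A i j = 1) ∧ ∃ n : ℕ, 0 < n ∧ ∀ i j, 0 < (A ^ n) i j

/-- A finite word is admissible, i.e. belongs to `Σ_A^*`. -/
def Admissible (A : Matrix (Fin l) (Fin l) ℕ) (x : List (Fin l)) : Prop :=
  x ≠ [] ∧ ∀ (i : ℕ) (h : i + 1 < x.length), A (x[i]'(by omega)) (x[i + 1]'h) = 1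

/-- The cylinder set `[x]` of a finite word (the empty word gives all of `Σ_A`). -/
def cylinder (A : Matrix (Fin l) (Fin l) ℕ) (x : List (Fin l)) : Set (SigmaA l A) :=
  {ω | ∀ (i : ℕ) (h : i < x.length), ω.1 i = x[i]'h}

/-- The initial word `(ω_1, …, ω_k)` of `ω`. -/
def wordPrefix {A : Matrix (Fin l) (Fin l) ℕ} (ω : SigmaA l A) (k : ℕ) : List (Fin l) :=
  List.ofFn (fun i : Fin k => ω.1 i)

/-- `μ` is a Gibbs measure for the potential `φ` with pressure `P`:
`c⁻¹ ≤ μ([ω_1,…,ω_k]) / exp(S_kφ(ω) − kP) ≤ c` for some `c > 1`. -/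
def IsGibbs {A : Matrix (Fin l) (Fin l) ℕ} (φ : SigmaA l A → ℝ) (P : ℝ)
    (μ : Measure (SigmaA l A)) : Prop :=
  ∃ c : ℝ, 1 < c ∧ ∀ (ω : SigmaA l A) (k : ℕ), 0 < k →
    c⁻¹ ≤ (μ (cylinder A (wordPrefix ω k))).toReal / Real.exp (birkhoff φ k ω - k * P) ∧
      (μ (cylinder A (wordPrefix ω k))).toReal / Real.exp (birkhoff φ k ω - k * P) ≤ c

/-- `φ` is Hölder continuous with respect to the metric `d(ω,υ) = 2^{-(ω ∧ υ)}`: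
there are `C` and an exponent `s > 0` with `|φ(ω) − φ(υ)| ≤ C ⬝ d(ω,υ)^s`, i.e.
`|φ(ω) − φ(υ)| ≤ C ⬝ 2^{-sn}` whenever `ω` and `υ` agree in their first `n` coordinates. -/
def HolderCont {A : Matrix (Fin l) (Fin l) ℕ} (φ : SigmaA l A → ℝ) : Prop :=
  ∃ C s : ℝ, 0 < s ∧ ∀ (ω υ : SigmaA l A) (n : ℕ),
    (∀ i < n, ω.1 i = υ.1 i) → |φ ω - φ υ| ≤ C * (2 : ℝ) ^ (-(s * n))

/-- `α(x)`: the number of children of the word `x` (the row sum of `A` at the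
last letter of `x`). -/
def alpha (A : Matrix (Fin l) (Fin l) ℕ) (x : List (Fin l)) : ℕ :=
  match x.getLast? with
  | some a => ∑ i, A a i
  | none => 0

/-- The `m`-th child `x θ_x⁻¹(m)` of the word `x`, the ordering of the children
being given by `θinv x`. -/
def child (θinv : List (Fin l) → ℕ → Fin l) (x : List (Fin l)) (m : ℕ) : List (Fin l) :=
  x ++ [θinv x m]

/-- The characteristic function of the cylinder `[x]`, as a function on `Σ_A`. -/
noncomputable def indC (A : Matrix (Fin l) (Fin l) ℕ) (x : List (Fin l)) : SigmaA l A → ℂ :=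
  (cylinder A x).indicator 1

/-- The `L²(μ)` inner product of two functions (conjugate linear in the first slot). -/
noncomputable def innerMu (A : Matrix (Fin l) (Fin l) ℕ) (μ : Measure (SigmaA l A))
    (f g : SigmaA l A → ℂ) : ℂ :=
  ∫ ω, (starRingEnd ℂ) (f ω) * g ω ∂μ

/-- The Haar function `e_{x,j} = ∑_m μ([xθ_x⁻¹(m)])^{-1/2} ⟨f_{x,m}, U_x f_{x,j}⟩_x χ_{[xθ_x⁻¹(m)]}`
as a function on `Σ_A`; here `u x m j = ⟨f_{x,m}, U_x f_{x,j}⟩_x` are the matrix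
coefficients of `U_x` in the orthonormal basis `(f_{x,m})_m`. -/
noncomputable def haarFun (A : Matrix (Fin l) (Fin l) ℕ) (μ : Measure (SigmaA l A))
    (θinv : List (Fin l) → ℕ → Fin l) (u : List (Fin l) → ℕ → ℕ → ℝ)
    (x : List (Fin l)) (j : ℕ) : SigmaA l A → ℂ := fun ω =>
  ∑ m ∈ Finset.range (alpha A x),
    ((((Real.sqrt ((μ (cylinder A (child θinv x m))).toReal))⁻¹ * u x m j : ℝ) : ℂ)) *
      indC A (child θinv x m) ω

/-- `H₀`: the complex linear span of the characteristic functions of cylinder sets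
of admissible words, together with `χ_{Σ_A}` (the cylinder of the empty word). -/
noncomputable def H0 (A : Matrix (Fin l) (Fin l) ℕ) : Submodule ℂ (SigmaA l A → ℂ) :=
  Submodule.span ℂ {f | ∃ x : List (Fin l), (x = [] ∨ Admissible A x) ∧ f = indC A x}

/-- The operator `D` (the Dirac operator on the dense domain `H₀`, extended to all
functions by the same formula; on `H₀` all but finitely many summands vanish). -/
noncomputable def Dop (A : Matrix (Fin l) (Fin l) ℕ) (μ : Measure (SigmaA l A))
    (θinv : List (Fin l) → ℕ → Fin l) (u : List (Fin l) → ℕ → ℕ → ℝ)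
    (h : SigmaA l A → ℂ) : SigmaA l A → ℂ := fun ω =>
  (∑ a : Fin l,
      (((μ (cylinder A [a])).toReal : ℂ))⁻¹ * innerMu A μ (indC A [a]) h * indC A [a] ω)
    - innerMu A μ (indC A []) h * indC A [] ω
    + ∑' y : List (Fin l),
        Set.indicator {y : List (Fin l) | Admissible A y}
          (fun y => ((((alpha A y : ℝ) - 1) / (μ (cylinder A y)).toReal : ℝ) : ℂ) *
            ∑ j ∈ Finset.range (alpha A y - 1),
              innerMu A μ (haarFun A μ θinv u y j) h * haarFun A μ θinv u y j ω) y

/-! Testing the commutator on `h = 1` gives `‖D a‖₂ ≤ 1`, since `D 1 = 0`. The orthogonal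
projection onto the span of the Haar functions of the word `ω_1 ⋯ ω_k` is the martingale difference
`Δ_k` of the filtration by initial words, so `D` multiplies `Δ_k a (ω)` by the factor
`(α(ω_1 ⋯ ω_k) - 1) / μ[ω_1 ⋯ ω_k]`, which is at least `1 / μ[ω_1 ⋯ ω_k]` unless `Δ_k a (ω) = 0`.
By Cauchy–Schwarz the average of `D a` over a cylinder `[x]` is at most `μ[x]^{-1/2}`, and as the
masses of a cylinder and its children are comparable, `|Δ_k a (ω)| ≤ C μ[ω_1 ⋯ ω_k]^{1/2}`. For a
Gibbs measure the masses of cylinders decay exponentially in their length: a cylinder splits after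
boundedly many steps, and every part of it carries a definite proportion of the mass. Hence `a` is
approximated by its averages over cylinders of length `N`, uniformly in `a`, and these averages lie
in a bounded subset of a space of finite dimension. -/

section Auxiliary

lemma summable_of_add_le_mul {f : ℕ → ℝ} (hf : ∀ k, 0 ≤ f k) {r : ℝ} (hr : r < 1) {n : ℕ}
    (h : ∀ k, f (n + k) ≤ r * f k) : Summable f := by
  refine summable_of_sum_range_le (c := (∑ k ∈ Finset.range n, f k) / (1 - r)) hf fun N => ?_
  have hN : ∑ k ∈ Finset.range N, f k
      ≤ ∑ k ∈ Finset.range n, f k + r * ∑ k ∈ Finset.range N, f k :=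
    calc ∑ k ∈ Finset.range N, f k ≤ ∑ k ∈ Finset.range (n + N), f k :=
          Finset.sum_le_sum_of_subset_of_nonneg (Finset.range_mono (by omega)) fun k _ _ => hf k
      _ = ∑ k ∈ Finset.range n, f k + ∑ k ∈ Finset.range N, f (n + k) :=
          Finset.sum_range_add f n N
      _ ≤ ∑ k ∈ Finset.range n, f k + r * ∑ k ∈ Finset.range N, f k := by
          rw [Finset.mul_sum]
          gcongr with k
          exact h k
  rw [le_div_iff₀ (sub_pos.2 hr)]
  linarith

lemma norm_setAverage_le {α E : Type*} [MeasurableSpace α] [NormedAddCommGroup E]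
    [NormedSpace ℝ E] {μ : Measure α} {f : α → E} {p : ℝ≥0∞} (hp : 1 ≤ p) (hf : MemLp f p μ)
    (s : Set α) :
    ‖⨍ x in s, f x ∂μ‖ ≤ μ.real s ^ (-(1 / p.toReal)) * (eLpNorm f p μ).toReal := by
  rcases (measureReal_nonneg (μ := μ) (s := s)).eq_or_lt with hs | hs
  · rw [setAverage_eq, ← hs, inv_zero, zero_smul, norm_zero]
    positivity
  have hs' : μ s ≠ ∞ := fun h => by simp [measureReal_def, h] at hs
  have henorm : ‖∫ x in s, f x ∂μ‖ₑ ≤ eLpNorm f p μ * μ s ^ (1 - 1 / p.toReal) :=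
    calc ‖∫ x in s, f x ∂μ‖ₑ ≤ eLpNorm f 1 (μ.restrict s) := by
          rw [eLpNorm_one_eq_lintegral_enorm]
          exact enorm_integral_le_lintegral_enorm f
      _ ≤ eLpNorm f p (μ.restrict s) * μ s ^ (1 - 1 / p.toReal) := by
          simpa using eLpNorm_le_eLpNorm_mul_rpow_measure_univ hp hf.1.restrict
      _ ≤ eLpNorm f p μ * μ s ^ (1 - 1 / p.toReal) := by
          gcongr
          exact Measure.restrict_le_self
  have hnorm : ‖∫ x in s, f x ∂μ‖ ≤ (eLpNorm f p μ).toReal * μ.real s ^ (1 - 1 / p.toReal) := by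
    have hp' : 0 ≤ 1 - 1 / p.toReal := by
      rcases eq_or_ne p ∞ with rfl | hp_top
      · simp
      · have : 1 ≤ p.toReal := by simpa using ENNReal.toReal_mono hp_top hp
        rw [sub_nonneg, div_le_one (by linarith)]
        exact this
    have := ENNReal.toReal_mono
      (ENNReal.mul_ne_top hf.2.ne (ENNReal.rpow_ne_top_of_nonneg hp' hs')) henorm
    rwa [toReal_enorm, ENNReal.toReal_mul, ← ENNReal.toReal_rpow] at this
  rw [setAverage_eq, norm_smul, norm_inv, Real.norm_of_nonneg hs.le, inv_mul_le_iff₀ hs]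
  refine hnorm.trans_eq ?_
  rw [sub_eq_add_neg, Real.rpow_add hs, Real.rpow_one]
  ring

lemma exists_finset_net_of_factorsThrough {X Y E : Type*} [PseudoMetricSpace E] {r : X → Y}
    (hr : (Set.range r).Finite) {K : Set E} (hK : TotallyBounded K) {ε : ℝ} (hε : 0 < ε) :
    ∃ t : Finset (X → E), ∀ g : X → E, Function.FactorsThrough g r → (∀ x, g x ∈ K) →
      ∃ b ∈ t, ∀ x, dist (g x) (b x) < ε := by
  classical
  obtain ⟨F, hF, hKF⟩ := Metric.totallyBounded_iff.1 hK ε hε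
  have : Fintype F := hF.fintype
  have : Fintype (Set.range r) := hr.fintype
  refine ⟨Finset.univ.image fun (c : Set.range r → F) x => (c ⟨r x, x, rfl⟩ : E),
    fun g hg hgK => ?_⟩
  have hnear : ∀ x, ∃ z : F, dist (g x) z < ε := fun x => by
    simpa using hKF (hgK x)
  choose z hz using hnear
  choose s hs using fun y : Set.range r => y.2
  refine ⟨_, Finset.mem_image_of_mem _ (Finset.mem_univ fun y => z (s y)), fun x => ?_⟩
  simpa only [hg (hs ⟨r x, x, rfl⟩)] using hz (s ⟨r x, x, rfl⟩)

lemma sum_row_mul_row_of_orthonormal_columns {R : Type*} [CommRing R] {n : ℕ} {v : ℕ → ℕ → R}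
    (hv : ∀ j < n, ∀ j' < n, ∑ m ∈ Finset.range n, v m j * v m j' = if j = j' then 1 else 0)
    {m m' : ℕ} (hm : m < n) (hm' : m' < n) :
    ∑ j ∈ Finset.range n, v m j * v m' j = if m = m' then 1 else 0 := by
  let M : Matrix (Fin n) (Fin n) R := fun i j => v i j
  have hcol : M.transpose * M = 1 := by
    ext i j
    have := hv i i.2 j j.2
    rw [← Fin.sum_univ_eq_sum_range fun m => v m i * v m j] at this
    simpa only [Matrix.mul_apply, Matrix.transpose_apply, Matrix.one_apply, Fin.ext_iff] using this
  have hrow : (M * M.transpose) ⟨m, hm⟩ ⟨m', hm'⟩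
      = (1 : Matrix (Fin n) (Fin n) R) ⟨m, hm⟩ ⟨m', hm'⟩ := by
    rw [mul_eq_one_comm.1 hcol]
  rw [← Fin.sum_univ_eq_sum_range fun j => v m j * v m' j]
  simpa only [Matrix.mul_apply, Matrix.transpose_apply, Matrix.one_apply, Fin.ext_iff] using hrow

/- Orthogonal projection onto the Haar functions of a word in coordinates: `r` and `s m` are the
square roots of the masses of the word and of its `m`-th child, `I m` is the integral over the
child, and `v` is the matrix of `U_x`. -/
lemma sum_pred_mul_of_orthonormal_columns {K : Type*} [Field K] {n : ℕ} {v : ℕ → ℕ → K}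
    (hv : ∀ j < n, ∀ j' < n, ∑ m ∈ Finset.range n, v m j * v m j' = if j = j' then 1 else 0)
    {r : K} {s I : ℕ → K} (hlast : ∀ m < n, v m (n - 1) = r⁻¹ * s m)
    (hI : ∀ m < n, s m = 0 → I m = 0) {m : ℕ} (hm : m < n) (hsm : s m ≠ 0) :
    ∑ j ∈ Finset.range (n - 1),
        (∑ m' ∈ Finset.range n, (s m')⁻¹ * v m' j * I m') * ((s m)⁻¹ * v m j)
      = (s m ^ 2)⁻¹ * I m - (r ^ 2)⁻¹ * ∑ m' ∈ Finset.range n, I m' := by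
  have hrow : ∀ m' < n, ∑ j ∈ Finset.range (n - 1), v m' j * v m j
      = (if m' = m then 1 else 0) - (r ^ 2)⁻¹ * (s m' * s m) := fun m' hm' => by
    have h := sum_row_mul_row_of_orthonormal_columns hv hm' hm
    rw [← Nat.sub_add_cancel (Nat.one_le_of_lt hm), Finset.sum_range_succ, hlast m' hm',
      hlast m hm] at h
    rw [← h]
    ring
  calc _ = ∑ m' ∈ Finset.range n, (s m')⁻¹ * I m' * (s m)⁻¹ *
        ∑ j ∈ Finset.range (n - 1), v m' j * v m j := by
        simp only [Finset.sum_mul, Finset.mul_sum]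
        rw [Finset.sum_comm]
        exact Finset.sum_congr rfl fun m' _ => Finset.sum_congr rfl fun j _ => by ring
    _ = ∑ m' ∈ Finset.range n,
        ((if m' = m then (s m ^ 2)⁻¹ * I m else 0) - (r ^ 2)⁻¹ * I m') := by
        refine Finset.sum_congr rfl fun m' hm' => ?_
        have hm'n := Finset.mem_range.1 hm'
        have hcancel : (s m')⁻¹ * s m' * I m' = I m' := by
          by_cases h0 : s m' = 0
          · rw [hI m' hm'n h0, mul_zero]
          · rw [inv_mul_cancel₀ h0, one_mul]
        have hdiag : (s m')⁻¹ * I m' * (s m)⁻¹ * (if m' = m then 1 else 0)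
            = if m' = m then (s m ^ 2)⁻¹ * I m else 0 := by
          split_ifs with h
          · rw [h]
            ring
          · rw [mul_zero]
        rw [hrow m' hm'n, mul_sub, hdiag]
        congr 1
        linear_combination (r ^ 2)⁻¹ * hcancel +
          (s m')⁻¹ * s m' * I m' * (r ^ 2)⁻¹ * inv_mul_cancel₀ hsm
    _ = _ := by
        rw [Finset.sum_sub_distrib, Finset.sum_ite_eq', if_pos (Finset.mem_range.2 hm),
          ← Finset.mul_sum]

end Auxiliary

section Cylinders

variable {A : Matrix (Fin l) (Fin l) ℕ} {ω υ : SigmaA l A} {x : List (Fin l)} {j k : ℕ}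

lemma length_wordPrefix (ω : SigmaA l A) (k : ℕ) : (wordPrefix ω k).length = k :=
  List.length_ofFn

lemma wordPrefix_zero (ω : SigmaA l A) : wordPrefix ω 0 = [] :=
  List.ofFn_zero

lemma wordPrefix_succ (ω : SigmaA l A) (k : ℕ) :
    wordPrefix ω (k + 1) = wordPrefix ω k ++ [ω.1 k] :=
  List.ofFn_succ_last

lemma wordPrefix_eq_iff : wordPrefix υ k = wordPrefix ω k ↔ ∀ i < k, υ.1 i = ω.1 i := by
  rw [wordPrefix, wordPrefix, List.ofFn_inj, funext_iff, Fin.forall_iff]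

lemma wordPrefix_eq_of_le (hjk : j ≤ k) (h : wordPrefix υ k = wordPrefix ω k) :
    wordPrefix υ j = wordPrefix ω j :=
  wordPrefix_eq_iff.2 fun i hi => wordPrefix_eq_iff.1 h i (hi.trans_le hjk)

lemma finite_range_wordPrefix (A : Matrix (Fin l) (Fin l) ℕ) (k : ℕ) :
    (Set.range fun ω : SigmaA l A => wordPrefix ω k).Finite :=
  (List.finite_length_eq (Fin l) k).subset (Set.range_subset_iff.2 fun ω => length_wordPrefix ω k)

lemma admissible_wordPrefix_succ (ω : SigmaA l A) (k : ℕ) :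
    Admissible A (wordPrefix ω (k + 1)) := by
  refine ⟨by simp [wordPrefix], fun i _ => ?_⟩
  simpa only [wordPrefix, List.getElem_ofFn] using ω.2 i

lemma mem_cylinder_iff : ω ∈ cylinder A x ↔ wordPrefix ω x.length = x := by
  simp [cylinder, wordPrefix, List.ext_getElem_iff]

lemma cylinder_nil (A : Matrix (Fin l) (Fin l) ℕ) : cylinder A [] = Set.univ := by
  simp [cylinder]

lemma mem_cylinder_append_singleton {b : Fin l} :
    ω ∈ cylinder A (x ++ [b]) ↔ ω ∈ cylinder A x ∧ ω.1 x.length = b := by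
  rw [mem_cylinder_iff, mem_cylinder_iff, List.length_append, List.length_singleton,
    wordPrefix_succ]
  simp

lemma getLast_eq_of_mem_cylinder (hω : ω ∈ cylinder A x) (hx : x ≠ []) :
    x.getLast hx = ω.1 (x.length - 1) := by
  rw [List.getLast_eq_getElem, hω _ (Nat.sub_one_lt (List.length_pos_iff.2 hx).ne')]

lemma measurableSet_cylinder (x : List (Fin l)) : MeasurableSet (cylinder A x) := by
  have hcyl : cylinder A x = ⋂ i : Fin x.length, {ω : SigmaA l A | ω.1 i = x[i]} := by
    ext ω
    simp [cylinder, Fin.forall_iff]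
  rw [hcyl]
  exact MeasurableSet.iInter fun i =>
    (measurable_pi_apply (i : ℕ)).comp measurable_subtype_coe (measurableSet_singleton _)

lemma setIntegral_cylinder_eq_sum {E : Type*} [NormedAddCommGroup E] [NormedSpace ℝ E]
    {μ : Measure (SigmaA l A)} {f : SigmaA l A → E} (x : List (Fin l))
    (hf : IntegrableOn f (cylinder A x) μ) :
    ∫ ω in cylinder A x, f ω ∂μ = ∑ b : Fin l, ∫ ω in cylinder A (x ++ [b]), f ω ∂μ := by
  have hunion : cylinder A x = ⋃ b : Fin l, cylinder A (x ++ [b]) := by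
    ext ω
    simp [mem_cylinder_append_singleton]
  have hdisj : Pairwise (Function.onFun Disjoint fun b : Fin l => cylinder A (x ++ [b])) :=
    fun b b' hb => Set.disjoint_left.2 fun ω h h' => hb <|
      (mem_cylinder_append_singleton.1 h).2.symm.trans (mem_cylinder_append_singleton.1 h').2
  rw [hunion] at hf
  rw [hunion, integral_iUnion_fintype (fun b => measurableSet_cylinder _) hdisj
    fun b => hf.mono_set (Set.subset_iUnion (fun b => cylinder A (x ++ [b])) b)]

/-- The cylinder of length `k` around `ω`, that is the closed ball of radius `2⁻ᵏ`. -/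
def cylinderAt (ω : SigmaA l A) (k : ℕ) : Set (SigmaA l A) :=
  cylinder A (wordPrefix ω k)

lemma mem_cylinderAt : υ ∈ cylinderAt ω k ↔ wordPrefix υ k = wordPrefix ω k := by
  rw [cylinderAt, mem_cylinder_iff, length_wordPrefix]

lemma self_mem_cylinderAt (ω : SigmaA l A) (k : ℕ) : ω ∈ cylinderAt ω k :=
  mem_cylinderAt.2 rfl

lemma cylinderAt_zero (ω : SigmaA l A) : cylinderAt ω 0 = Set.univ := by
  rw [cylinderAt, wordPrefix_zero, cylinder_nil]

lemma cylinderAt_length (hω : ω ∈ cylinder A x) : cylinderAt ω x.length = cylinder A x := by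
  rw [cylinderAt, mem_cylinder_iff.1 hω]

lemma cylinderAt_subset (ω : SigmaA l A) (hjk : j ≤ k) : cylinderAt ω k ⊆ cylinderAt ω j :=
  fun _ hυ => mem_cylinderAt.2 (wordPrefix_eq_of_le hjk (mem_cylinderAt.1 hυ))

lemma measurableSet_cylinderAt (ω : SigmaA l A) (k : ℕ) : MeasurableSet (cylinderAt ω k) :=
  measurableSet_cylinder _

end Cylinders

section DependsOnPrefix

variable {A : Matrix (Fin l) (Fin l) ℕ} {E F G : Type*} {n m : ℕ}

/-- The function `f` is determined by the first `n` letters: it is locally constant, with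
`n` witnessing the uniformity. -/
def DependsOnPrefix (n : ℕ) (f : SigmaA l A → E) : Prop :=
  Function.FactorsThrough f fun ω => wordPrefix ω n

namespace DependsOnPrefix

lemma mono {f : SigmaA l A → E} (hf : DependsOnPrefix n f) (hnm : n ≤ m) :
    DependsOnPrefix m f :=
  fun _ _ h => hf (wordPrefix_eq_of_le hnm h)

lemma map₂ {f : SigmaA l A → E} {g : SigmaA l A → F} (hf : DependsOnPrefix n f)
    (hg : DependsOnPrefix n g) (c : E → F → G) : DependsOnPrefix n fun ω => c (f ω) (g ω) :=
  fun _ _ h => congrArg₂ c (hf h) (hg h)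

lemma eq_of_mem_cylinderAt {f : SigmaA l A → E} (hf : DependsOnPrefix n f) {ω υ : SigmaA l A}
    (hυ : υ ∈ cylinderAt ω n) : f υ = f ω :=
  hf (mem_cylinderAt.1 hυ)

lemma finite_range {f : SigmaA l A → E} (hf : DependsOnPrefix n f) : (Set.range f).Finite := by
  rcases isEmpty_or_nonempty (SigmaA l A) with _ | ⟨⟨ω⟩⟩
  · exact Set.range_eq_empty f ▸ Set.finite_empty
  · have : Nonempty E := ⟨f ω⟩
    obtain ⟨e, rfl⟩ := (Function.factorsThrough_iff f).1 hf
    exact Set.range_comp e _ ▸ (finite_range_wordPrefix A n).image e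

lemma memLp [NormedAddCommGroup E] {f : SigmaA l A → E} (hf : DependsOnPrefix n f)
    (μ : Measure (SigmaA l A)) [IsFiniteMeasure μ] (p : ℝ≥0∞) : MemLp f p μ := by
  have hfibre : ∀ c, MeasurableSet (f ⁻¹' {c}) := fun c => by
    have hunion : f ⁻¹' {c} = ⋃ x ∈ (fun ω : SigmaA l A => wordPrefix ω n) '' (f ⁻¹' {c}),
        cylinder A x := by
      ext ω
      simp only [Set.biUnion_image, Set.mem_iUnion₂]
      exact ⟨fun hω => ⟨ω, hω, self_mem_cylinderAt ω n⟩,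
        fun ⟨υ, hυ, hω⟩ => (hf.eq_of_mem_cylinderAt hω).trans hυ⟩
    rw [hunion]
    exact ((finite_range_wordPrefix A n).subset (Set.image_subset_range _ _)).measurableSet_biUnion
      fun x _ => measurableSet_cylinder x
  exact (SimpleFunc.mk f hfibre hf.finite_range).memLp_of_isFiniteMeasure p μ

lemma integrable [NormedAddCommGroup E] {f : SigmaA l A → E} (hf : DependsOnPrefix n f)
    (μ : Measure (SigmaA l A)) [IsFiniteMeasure μ] : Integrable f μ :=
  memLp_one_iff_integrable.1 (hf.memLp μ 1)

end DependsOnPrefix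

lemma indC_of_mem {x : List (Fin l)} {ω : SigmaA l A} (h : ω ∈ cylinder A x) : indC A x ω = 1 :=
  Set.indicator_of_mem h 1

lemma indC_of_notMem {x : List (Fin l)} {ω : SigmaA l A} (h : ω ∉ cylinder A x) :
    indC A x ω = 0 :=
  Set.indicator_of_notMem h 1

lemma dependsOnPrefix_indC (A : Matrix (Fin l) (Fin l) ℕ) (x : List (Fin l)) :
    DependsOnPrefix x.length (indC A x) := fun ω υ h => by
  have hmem : ω ∈ cylinder A x ↔ υ ∈ cylinder A x := by
    rw [mem_cylinder_iff, mem_cylinder_iff]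
    exact Eq.congr_left h
  classical
  simp only [indC, Set.indicator_apply, hmem, Pi.one_apply]

lemma exists_dependsOnPrefix_of_mem_H0 {f : SigmaA l A → ℂ} (hf : f ∈ H0 A) :
    ∃ n, DependsOnPrefix n f := by
  induction hf using Submodule.span_induction with
  | mem f hf =>
    obtain ⟨x, -, rfl⟩ := hf
    exact ⟨x.length, dependsOnPrefix_indC A x⟩
  | zero => exact ⟨0, fun _ _ _ => rfl⟩
  | add f g _ _ hf hg =>
    obtain ⟨n, hn⟩ := hf
    obtain ⟨m, hm⟩ := hg
    exact ⟨max n m, (hn.mono (le_max_left n m)).map₂ (hm.mono (le_max_right n m)) (· + ·)⟩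
  | smul c f _ hf =>
    obtain ⟨n, hn⟩ := hf
    exact ⟨n, fun _ _ h => congrArg (c • ·) (hn h)⟩

end DependsOnPrefix

section Martingale

variable {A : Matrix (Fin l) (Fin l) ℕ} {E : Type*} [NormedAddCommGroup E] [NormedSpace ℝ E]
  {μ : Measure (SigmaA l A)} {f : SigmaA l A → E} {i j k n : ℕ}

/-- The average of `f` over the cylinder of length `k` around `ω`: the conditional expectation
of `f` given the first `k` letters, in its pointwise defined version. -/
noncomputable def cylAvg (μ : Measure (SigmaA l A)) (k : ℕ) (f : SigmaA l A → E)
    (ω : SigmaA l A) : E :=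
  ⨍ υ in cylinderAt ω k, f υ ∂μ

/-- The martingale difference of `f` at time `k`. -/
noncomputable def cylDiff (μ : Measure (SigmaA l A)) (k : ℕ) (f : SigmaA l A → E)
    (ω : SigmaA l A) : E :=
  cylAvg μ (k + 1) f ω - cylAvg μ k f ω

/-- Every cylinder that is met by `Σ_A` has positive mass. -/
def ChargesCylinders (μ : Measure (SigmaA l A)) : Prop :=
  ∀ ω k, 0 < μ.real (cylinderAt ω k)

lemma dependsOnPrefix_cylAvg (μ : Measure (SigmaA l A)) (k : ℕ) (f : SigmaA l A → E) :
    DependsOnPrefix k (cylAvg μ k f) := fun ω υ h => by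
  simp only [cylAvg, cylinderAt, h]

lemma dependsOnPrefix_cylDiff (μ : Measure (SigmaA l A)) (k : ℕ) (f : SigmaA l A → E) :
    DependsOnPrefix (k + 1) (cylDiff μ k f) :=
  (dependsOnPrefix_cylAvg μ (k + 1) f).map₂
    ((dependsOnPrefix_cylAvg μ k f).mono k.le_succ) (· - ·)

lemma cylAvg_zero [IsProbabilityMeasure μ] (f : SigmaA l A → E) (ω : SigmaA l A) :
    cylAvg μ 0 f ω = ∫ υ, f υ ∂μ := by
  rw [cylAvg, cylinderAt_zero, Measure.restrict_univ, average_eq_integral]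

lemma cylAvg_smul {w : SigmaA l A → ℝ} (hw : DependsOnPrefix k w) (f : SigmaA l A → E)
    (ω : SigmaA l A) : cylAvg μ k (fun υ => w υ • f υ) ω = w ω • cylAvg μ k f ω := by
  rw [cylAvg, setAverage_congr_fun (measurableSet_cylinderAt ω k)
    (ae_of_all μ fun υ hυ => by rw [hw.eq_of_mem_cylinderAt hυ]), setAverage_eq, integral_smul,
    smul_comm, ← setAverage_eq, cylAvg]

lemma cylAvg_finset_sum {ι : Type*} (s : Finset ι) {f : ι → SigmaA l A → E}
    (hf : ∀ i ∈ s, Integrable (f i) μ) (k : ℕ) (ω : SigmaA l A) :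
    cylAvg μ k (fun υ => ∑ i ∈ s, f i υ) ω = ∑ i ∈ s, cylAvg μ k (f i) ω := by
  simp only [cylAvg, setAverage_eq]
  rw [integral_finsetSum s fun i hi => (hf i hi).integrableOn, Finset.smul_sum]

lemma cylDiff_finset_sum {ι : Type*} (s : Finset ι) {f : ι → SigmaA l A → E}
    (hf : ∀ i ∈ s, Integrable (f i) μ) (k : ℕ) (ω : SigmaA l A) :
    cylDiff μ k (fun υ => ∑ i ∈ s, f i υ) ω = ∑ i ∈ s, cylDiff μ k (f i) ω := by
  simp only [cylDiff, cylAvg_finset_sum s hf, Finset.sum_sub_distrib]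

lemma norm_cylAvg_le (hf : MemLp f 2 μ) (k : ℕ) (ω : SigmaA l A) :
    ‖cylAvg μ k f ω‖ ≤ (√(μ.real (cylinderAt ω k)))⁻¹ * (eLpNorm f 2 μ).toReal := by
  have h := norm_setAverage_le one_le_two hf (cylinderAt ω k)
  rwa [ENNReal.toReal_ofNat, Real.rpow_neg measureReal_nonneg, ← Real.sqrt_eq_rpow] at h

lemma norm_cylDiff_le_of_eLpNorm_le_one [IsFiniteMeasure μ] (hμ : ChargesCylinders μ)
    (hf : MemLp f 2 μ) (hf1 : eLpNorm f 2 μ ≤ 1) (k : ℕ) (ω : SigmaA l A) :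
    ‖cylDiff μ k f ω‖ ≤ 2 * (√(μ.real (cylinderAt ω (k + 1))))⁻¹ := by
  have hnorm : (eLpNorm f 2 μ).toReal ≤ 1 := ENNReal.toReal_le_of_le_ofReal one_pos.le (by simpa)
  have hmass : (√(μ.real (cylinderAt ω k)))⁻¹ ≤ (√(μ.real (cylinderAt ω (k + 1))))⁻¹ := by
    have := hμ ω (k + 1)
    gcongr
    · finiteness
    · exact cylinderAt_subset ω k.le_succ
  calc ‖cylDiff μ k f ω‖ ≤ ‖cylAvg μ (k + 1) f ω‖ + ‖cylAvg μ k f ω‖ := norm_sub_le _ _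
    _ ≤ (√(μ.real (cylinderAt ω (k + 1))))⁻¹ * 1 + (√(μ.real (cylinderAt ω k)))⁻¹ * 1 := by
        gcongr <;> exact (norm_cylAvg_le hf _ ω).trans (by gcongr)
    _ ≤ 2 * (√(μ.real (cylinderAt ω (k + 1))))⁻¹ := by linarith

variable [CompleteSpace E]

lemma cylAvg_eq_self [IsFiniteMeasure μ] (hμ : ChargesCylinders μ) (hf : DependsOnPrefix n f)
    (hn : n ≤ k) (ω : SigmaA l A) : cylAvg μ k f ω = f ω := by
  rw [cylAvg, setAverage_congr_fun (measurableSet_cylinderAt ω k)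
    (ae_of_all μ fun υ hυ => (hf.mono hn).eq_of_mem_cylinderAt hυ)]
  exact setAverage_const ((measureReal_ne_zero_iff).1 (hμ ω k).ne') (measure_ne_top _ _) _

lemma cylDiff_eq_zero [IsFiniteMeasure μ] (hμ : ChargesCylinders μ) (hf : DependsOnPrefix n f)
    (hn : n ≤ k) (ω : SigmaA l A) : cylDiff μ k f ω = 0 := by
  rw [cylDiff, cylAvg_eq_self hμ hf (hn.trans k.le_succ), cylAvg_eq_self hμ hf hn, sub_self]

lemma setIntegral_cylAvg [IsFiniteMeasure μ] (hf : Integrable f μ) {x : List (Fin l)}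
    (hx : x.length ≤ k) :
    ∫ ω in cylinder A x, cylAvg μ k f ω ∂μ = ∫ ω in cylinder A x, f ω ∂μ := by
  induction hd : k - x.length generalizing x with
  | zero =>
    obtain rfl : x.length = k := by omega
    rcases (cylinder A x).eq_empty_or_nonempty with hempty | ⟨ω, hω⟩
    · simp [hempty]
    · rw [← cylinderAt_length hω, setIntegral_congr_fun (measurableSet_cylinderAt ω _) fun υ =>
        (dependsOnPrefix_cylAvg μ x.length f).eq_of_mem_cylinderAt, setIntegral_const]
      exact measure_smul_setAverage f (measure_ne_top _ _)
  | succ d ih =>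
    rw [setIntegral_cylinder_eq_sum x hf.integrableOn, setIntegral_cylinder_eq_sum x
      ((dependsOnPrefix_cylAvg μ k f).integrable μ).integrableOn]
    exact Finset.sum_congr rfl fun b _ =>
      ih (by rw [List.length_append, List.length_singleton]; omega)
        (by rw [List.length_append, List.length_singleton]; omega)

lemma cylAvg_cylAvg [IsFiniteMeasure μ] (hf : Integrable f μ) (hjk : j ≤ k) (ω : SigmaA l A) :
    cylAvg μ j (cylAvg μ k f) ω = cylAvg μ j f ω := by
  rw [cylAvg, cylAvg, setAverage_eq, setAverage_eq]
  congr 1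
  exact setIntegral_cylAvg hf ((length_wordPrefix ω j).trans_le hjk)

lemma cylAvg_cylDiff_self [IsFiniteMeasure μ] (hf : Integrable f μ) (ω : SigmaA l A) :
    cylAvg μ k (cylDiff μ k f) ω = 0 := by
  have hsub : cylAvg μ k (cylDiff μ k f) ω
      = cylAvg μ k (cylAvg μ (k + 1) f) ω - cylAvg μ k (cylAvg μ k f) ω := by
    rw [cylAvg, cylAvg, cylAvg, setAverage_eq, setAverage_eq, setAverage_eq, ← smul_sub,
      ← integral_sub ((dependsOnPrefix_cylAvg μ _ f).integrable μ).integrableOn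
        ((dependsOnPrefix_cylAvg μ _ f).integrable μ).integrableOn]
    rfl
  rw [hsub, cylAvg_cylAvg hf k.le_succ, cylAvg_cylAvg hf le_rfl, sub_self]

lemma cylAvg_smul_cylDiff [IsFiniteMeasure μ] (hf : Integrable f μ) {w : SigmaA l A → ℝ}
    (hw : DependsOnPrefix k w) (hjk : j ≤ k) (ω : SigmaA l A) :
    cylAvg μ j (fun υ => w υ • cylDiff μ k f υ) ω = 0 := by
  have hzero : cylAvg μ k (fun υ => w υ • cylDiff μ k f υ) = 0 := by
    funext υ
    rw [cylAvg_smul hw, cylAvg_cylDiff_self hf, smul_zero, Pi.zero_apply]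
  rw [← cylAvg_cylAvg (((hw.mono k.le_succ).map₂ (dependsOnPrefix_cylDiff μ k f)
    (· • ·)).integrable μ) hjk, hzero]
  simp [cylAvg]

lemma cylDiff_smul_cylDiff [IsFiniteMeasure μ] (hμ : ChargesCylinders μ) (hf : Integrable f μ)
    {w : SigmaA l A → ℝ} (hw : DependsOnPrefix i w) (k : ℕ) (ω : SigmaA l A) :
    cylDiff μ k (fun υ => w υ • cylDiff μ i f υ) ω
      = if k = i then w ω • cylDiff μ i f ω else 0 := by
  have hdep := (hw.mono i.le_succ).map₂ (dependsOnPrefix_cylDiff μ i f) (· • ·)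
  rcases lt_trichotomy k i with hki | rfl | hik
  · rw [if_neg hki.ne, cylDiff, cylAvg_smul_cylDiff hf hw hki, cylAvg_smul_cylDiff hf hw hki.le,
      sub_zero]
  · rw [if_pos rfl, cylDiff, cylAvg_smul_cylDiff hf hw le_rfl, sub_zero,
      cylAvg_eq_self hμ hdep le_rfl]
  · rw [if_neg hik.ne', cylDiff_eq_zero hμ hdep hik]

end Martingale

section Haar

variable {A : Matrix (Fin l) (Fin l) ℕ} {μ : Measure (SigmaA l A)}
  {θinv : List (Fin l) → ℕ → Fin l} {u : List (Fin l) → ℕ → ℕ → ℝ}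
  {x : List (Fin l)} {f : SigmaA l A → ℂ} {ω : SigmaA l A} {m : ℕ}

/-- The data `θ`, `U` from which the Haar functions are built: `θinv x` enumerates the letters
that may follow `x`, and `u x` is the matrix of an orthogonal map sending the last basis vector
to `μ([x])^{-1/2} (1, …, 1)`. -/
structure IsHaarSystem (A : Matrix (Fin l) (Fin l) ℕ) (μ : Measure (SigmaA l A))
    (θinv : List (Fin l) → ℕ → Fin l) (u : List (Fin l) → ℕ → ℕ → ℝ) : Prop where
  bijOn (x : List (Fin l)) (hx : Admissible A x) :
    Set.BijOn (θinv x) (Set.Iio (alpha A x)) {y : Fin l | A (x.getLast hx.1) y = 1}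
  orthonormal (x : List (Fin l)) : Admissible A x → ∀ j < alpha A x, ∀ j' < alpha A x,
    ∑ m ∈ Finset.range (alpha A x), u x m j * u x m j' = if j = j' then 1 else 0
  last (x : List (Fin l)) : Admissible A x → ∀ m < alpha A x, u x m (alpha A x - 1) =
    (√(μ.real (cylinder A x)))⁻¹ * √(μ.real (cylinder A (child θinv x m)))

/-- The orthogonal projection onto the span of the Haar functions `e_{x,j}`, `j < α(x)`. -/
noncomputable def haarProj (A : Matrix (Fin l) (Fin l) ℕ) (μ : Measure (SigmaA l A))
    (θinv : List (Fin l) → ℕ → Fin l) (u : List (Fin l) → ℕ → ℕ → ℝ) (x : List (Fin l))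
    (f : SigmaA l A → ℂ) (ω : SigmaA l A) : ℂ :=
  ∑ j ∈ Finset.range (alpha A x - 1),
    innerMu A μ (haarFun A μ θinv u x j) f * haarFun A μ θinv u x j ω

lemma conj_indC_mul (x : List (Fin l)) (f : SigmaA l A → ℂ) (ω : SigmaA l A) :
    (starRingEnd ℂ) (indC A x ω) * f ω = (cylinder A x).indicator f ω := by
  by_cases h : ω ∈ cylinder A x
  · rw [indC_of_mem h, map_one, one_mul, Set.indicator_of_mem h]
  · rw [indC_of_notMem h, map_zero, zero_mul, Set.indicator_of_notMem h]

lemma innerMu_indC (x : List (Fin l)) (f : SigmaA l A → ℂ) :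
    innerMu A μ (indC A x) f = ∫ ω in cylinder A x, f ω ∂μ := by
  simp only [innerMu, conj_indC_mul, integral_indicator (measurableSet_cylinder x)]

lemma innerMu_haarFun (x : List (Fin l)) (j : ℕ) (hf : Integrable f μ) :
    innerMu A μ (haarFun A μ θinv u x j) f = ∑ m ∈ Finset.range (alpha A x),
      (((√(μ.real (cylinder A (child θinv x m))))⁻¹ * u x m j : ℝ) : ℂ) *
        ∫ ω in cylinder A (child θinv x m), f ω ∂μ := by
  simp only [innerMu, haarFun, map_sum, map_mul, Complex.conj_ofReal, Finset.sum_mul, mul_assoc,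
    conj_indC_mul]
  rw [integral_finsetSum _ fun m _ => (hf.indicator (measurableSet_cylinder _)).const_mul _]
  simp only [integral_const_mul, integral_indicator (measurableSet_cylinder _)]
  rfl

lemma haarFun_of_notMem (hω : ω ∉ cylinder A x) (j : ℕ) : haarFun A μ θinv u x j ω = 0 :=
  Finset.sum_eq_zero fun m _ => by
    rw [indC_of_notMem (x := child θinv x m) fun h => hω (mem_cylinder_append_singleton.1 h).1,
      mul_zero]

lemma haarProj_of_notMem (hω : ω ∉ cylinder A x) (f : SigmaA l A → ℂ) :
    haarProj A μ θinv u x f ω = 0 :=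
  Finset.sum_eq_zero fun j _ => by rw [haarFun_of_notMem hω, mul_zero]

namespace IsHaarSystem

lemma haarFun_of_mem_child (H : IsHaarSystem A μ θinv u) (hx : Admissible A x)
    (hm : m < alpha A x) (hω : ω ∈ cylinder A (child θinv x m)) (j : ℕ) :
    haarFun A μ θinv u x j ω
      = (((√(μ.real (cylinder A (child θinv x m))))⁻¹ * u x m j : ℝ) : ℂ) := by
  rw [haarFun, Finset.sum_eq_single_of_mem m (Finset.mem_range.2 hm), indC_of_mem hω, mul_one]
  · rfl
  · intro m' hm' hne
    rw [indC_of_notMem, mul_zero]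
    exact fun hω' => hne ((H.bijOn x hx).injOn (Finset.mem_range.1 hm') hm
      ((mem_cylinder_append_singleton.1 hω').2.symm.trans (mem_cylinder_append_singleton.1 hω).2))

lemma sum_setIntegral_child (H : IsHaarSystem A μ θinv u) (hx : Admissible A x)
    (hf : Integrable f μ) :
    ∑ m ∈ Finset.range (alpha A x), ∫ ω in cylinder A (child θinv x m), f ω ∂μ
      = ∫ ω in cylinder A x, f ω ∂μ := by
  classical
  have hempty : ∀ b, A (x.getLast hx.1) b ≠ 1 → cylinder A (x ++ [b]) = ∅ := fun b hb =>
    Set.eq_empty_of_forall_notMem fun ω hω => hb <| by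
      obtain ⟨hωx, hωb⟩ := mem_cylinder_append_singleton.1 hω
      rw [getLast_eq_of_mem_cylinder hωx, ← hωb]
      simpa only [Nat.sub_add_cancel (List.length_pos_iff.2 hx.1)] using ω.2 (x.length - 1)
  calc _ = ∑ b with A (x.getLast hx.1) b = 1, ∫ ω in cylinder A (x ++ [b]), f ω ∂μ := by
        refine Finset.sum_nbij (θinv x) ?_ ?_ ?_ fun m _ => rfl
        · exact fun m hm => by simpa using (H.bijOn x hx).mapsTo (Finset.mem_range.1 hm)
        · simpa using (H.bijOn x hx).injOn
        · simpa using (H.bijOn x hx).surjOn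
    _ = ∑ b, ∫ ω in cylinder A (x ++ [b]), f ω ∂μ :=
        Finset.sum_subset (Finset.subset_univ _) fun b _ hb => by
          rw [hempty b (by simpa using hb), setIntegral_empty]
    _ = ∫ ω in cylinder A x, f ω ∂μ := (setIntegral_cylinder_eq_sum x hf.integrableOn).symm

lemma haarProj_of_mem_child [IsFiniteMeasure μ] (H : IsHaarSystem A μ θinv u)
    (hx : Admissible A x) (hf : Integrable f μ) (hm : m < alpha A x)
    (hω : ω ∈ cylinder A (child θinv x m)) (hpos : 0 < μ.real (cylinder A (child θinv x m))) :
    haarProj A μ θinv u x f ω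
      = ⨍ υ in cylinder A (child θinv x m), f υ ∂μ - ⨍ υ in cylinder A x, f υ ∂μ := by
  have hsq : ∀ y : List (Fin l), (√(μ.real (cylinder A y)) : ℂ) ^ 2 = μ.real (cylinder A y) :=
    fun y => by rw [← Complex.ofReal_pow, Real.sq_sqrt measureReal_nonneg]
  have h := sum_pred_mul_of_orthonormal_columns (v := fun m j => (u x m j : ℂ))
    (s := fun m => (√(μ.real (cylinder A (child θinv x m))) : ℂ))
    (I := fun m => ∫ υ in cylinder A (child θinv x m), f υ ∂μ)
    (fun j hj j' hj' => by
      simpa [apply_ite Complex.ofReal] using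
        congrArg Complex.ofReal (H.orthonormal x hx j hj j' hj'))
    (r := √(μ.real (cylinder A x))) (fun m hm => by exact_mod_cast H.last x hx m hm)
    (fun m _ h0 => setIntegral_measure_zero _ <| by
      rwa [Complex.ofReal_eq_zero, Real.sqrt_eq_zero measureReal_nonneg,
        measureReal_eq_zero_iff] at h0)
    hm (by exact_mod_cast (Real.sqrt_pos.2 hpos).ne')
  simp only [hsq, H.sum_setIntegral_child hx hf] at h
  simp only [haarProj, innerMu_haarFun x _ hf, H.haarFun_of_mem_child hx hm hω, setAverage_eq,
    Complex.real_smul, Complex.ofReal_mul, Complex.ofReal_inv, h]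

lemma exists_child_eq_wordPrefix (H : IsHaarSystem A μ θinv u) (ω : SigmaA l A) (k : ℕ) :
    ∃ m < alpha A (wordPrefix ω (k + 1)),
      child θinv (wordPrefix ω (k + 1)) m = wordPrefix ω (k + 2) := by
  have hx := admissible_wordPrefix_succ ω k
  have hnext : A ((wordPrefix ω (k + 1)).getLast hx.1) (ω.1 (k + 1)) = 1 := by
    rw [getLast_eq_of_mem_cylinder (self_mem_cylinderAt ω _), length_wordPrefix]
    exact ω.2 k
  obtain ⟨m, hm, hm'⟩ := (H.bijOn _ hx).surjOn hnext
  exact ⟨m, hm, by rw [child, hm', wordPrefix_succ ω (k + 1)]⟩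

lemma haarProj_wordPrefix [IsFiniteMeasure μ] (H : IsHaarSystem A μ θinv u)
    (hμ : ChargesCylinders μ) (hf : Integrable f μ) (ω : SigmaA l A) (k : ℕ) :
    haarProj A μ θinv u (wordPrefix ω (k + 1)) f ω = cylDiff μ (k + 1) f ω := by
  obtain ⟨m, hm, hchild⟩ := H.exists_child_eq_wordPrefix ω k
  rw [H.haarProj_of_mem_child (admissible_wordPrefix_succ ω k) hf hm
    (hchild ▸ self_mem_cylinderAt ω (k + 2)) (hchild ▸ hμ ω (k + 2)), hchild]
  rfl

end IsHaarSystem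

end Haar

section Dirac

variable {A : Matrix (Fin l) (Fin l) ℕ} {μ : Measure (SigmaA l A)}
  {θinv : List (Fin l) → ℕ → Fin l} {u : List (Fin l) → ℕ → ℕ → ℝ}
  {f : SigmaA l A → ℂ} {n k : ℕ}

/-- The eigenvalue of `D` on the Haar functions of the word `ω_1 ⋯ ω_k`, for `k = 0` on the
functions of the first letter that have mean zero. -/
noncomputable def diracWeight (μ : Measure (SigmaA l A)) (k : ℕ) (ω : SigmaA l A) : ℝ :=
  if k = 0 then 1 else ((alpha A (wordPrefix ω k) : ℝ) - 1) / μ.real (cylinderAt ω k)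

lemma dependsOnPrefix_diracWeight (μ : Measure (SigmaA l A)) (k : ℕ) :
    DependsOnPrefix k (diracWeight μ k) := fun ω υ h => by
  simp only [diracWeight, cylinderAt, h]

lemma dependsOnPrefix_diracWeight_smul_cylDiff (μ : Measure (SigmaA l A))
    (f : SigmaA l A → ℂ) (k : ℕ) :
    DependsOnPrefix (k + 1) fun ω => diracWeight μ k ω • cylDiff μ k f ω :=
  ((dependsOnPrefix_diracWeight μ k).mono k.le_succ).map₂ (dependsOnPrefix_cylDiff μ k f) (· • ·)

lemma inv_mul_innerMu_indC_wordPrefix (f : SigmaA l A → ℂ) (ω : SigmaA l A) (k : ℕ) :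
    (μ.real (cylinder A (wordPrefix ω k)) : ℂ)⁻¹ * innerMu A μ (indC A (wordPrefix ω k)) f
      = cylAvg μ k f ω := by
  rw [innerMu_indC, cylAvg, setAverage_eq, Complex.real_smul, Complex.ofReal_inv, cylinderAt]

lemma sum_innerMu_indC_singleton (f : SigmaA l A → ℂ) (ω : SigmaA l A) :
    ∑ a : Fin l, (μ.real (cylinder A [a]) : ℂ)⁻¹ * innerMu A μ (indC A [a]) f * indC A [a] ω
      = cylAvg μ 1 f ω := by
  have hmem : ∀ a, ω ∈ cylinder A [a] ↔ a = ω.1 0 := fun a => by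
    simp [cylinder, eq_comm]
  rw [Fintype.sum_eq_single (ω.1 0) fun a ha => by
    rw [indC_of_notMem (mt (hmem a).1 ha), mul_zero], indC_of_mem ((hmem _).2 rfl), mul_one]
  exact inv_mul_innerMu_indC_wordPrefix f ω 1

lemma tsum_eq_tsum_wordPrefix {E : Type*} [AddCommMonoid E] [TopologicalSpace E]
    {g : List (Fin l) → E} {ω : SigmaA l A} (hnil : g [] = 0)
    (hg : ∀ y, ω ∉ cylinder A y → g y = 0) : ∑' y, g y = ∑' k, g (wordPrefix ω (k + 1)) := by
  have hinj : Function.Injective fun k => wordPrefix ω (k + 1) := fun i j hij => by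
    simpa [length_wordPrefix] using congrArg List.length hij
  refine (hinj.tsum_eq fun y hy => ⟨y.length - 1, ?_⟩).symm
  have hpos : 0 < y.length := List.length_pos_iff.2 fun h => hy (h ▸ hnil)
  have hω : ω ∈ cylinder A y := not_not.1 (mt (hg y) hy)
  simpa only [Nat.sub_add_cancel hpos] using mem_cylinder_iff.1 hω

namespace IsHaarSystem

variable [IsProbabilityMeasure μ]

lemma Dop_eq_sum (H : IsHaarSystem A μ θinv u) (hμ : ChargesCylinders μ)
    (hf : DependsOnPrefix n f) (ω : SigmaA l A) :
    Dop A μ θinv u f ω = ∑ k ∈ Finset.range n, diracWeight μ k ω • cylDiff μ k f ω := by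
  have hwhole : innerMu A μ (indC A []) f * indC A [] ω = cylAvg μ 0 f ω := by
    rw [innerMu_indC, indC_of_mem (by simp [cylinder_nil]), mul_one, cylAvg_zero, cylinder_nil,
      Measure.restrict_univ]
  have hwords : ∑' y : List (Fin l), Set.indicator {y : List (Fin l) | Admissible A y}
      (fun y => ((((alpha A y : ℝ) - 1) / (μ (cylinder A y)).toReal : ℝ) : ℂ) *
        haarProj A μ θinv u y f ω) y
      = ∑ k ∈ Finset.range n, diracWeight μ (k + 1) ω • cylDiff μ (k + 1) f ω := by
    have hterm : ∀ k, Set.indicator {y : List (Fin l) | Admissible A y}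
        (fun y => ((((alpha A y : ℝ) - 1) / (μ (cylinder A y)).toReal : ℝ) : ℂ) *
          haarProj A μ θinv u y f ω) (wordPrefix ω (k + 1))
        = diracWeight μ (k + 1) ω • cylDiff μ (k + 1) f ω := fun k => by
      rw [Set.indicator_of_mem (s := {y | Admissible A y}) (admissible_wordPrefix_succ ω k),
        H.haarProj_wordPrefix hμ (hf.integrable μ), diracWeight, if_neg k.succ_ne_zero,
        Complex.real_smul]
      rfl
    rw [tsum_eq_tsum_wordPrefix (ω := ω)]
    · simp only [hterm]
      refine tsum_eq_sum fun k hk => ?_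
      rw [cylDiff_eq_zero hμ hf (by rw [Finset.mem_range] at hk; omega), smul_zero]
    · exact Set.indicator_of_notMem (s := {y | Admissible A y}) (fun h => h.1 rfl) _
    · exact fun y hy => Set.indicator_apply_eq_zero.2 fun _ => by
        rw [haarProj_of_notMem hy, mul_zero]
  calc Dop A μ θinv u f ω = cylAvg μ 1 f ω - cylAvg μ 0 f ω
        + ∑ k ∈ Finset.range n, diracWeight μ (k + 1) ω • cylDiff μ (k + 1) f ω := by
        rw [← sum_innerMu_indC_singleton, ← hwhole, ← hwords]
        rfl
    _ = ∑ k ∈ Finset.range (n + 1), diracWeight μ k ω • cylDiff μ k f ω := by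
        rw [Finset.sum_range_succ', diracWeight, if_pos rfl, one_smul, add_comm]
        rfl
    _ = ∑ k ∈ Finset.range n, diracWeight μ k ω • cylDiff μ k f ω := by
        rw [Finset.sum_range_succ, cylDiff_eq_zero hμ hf le_rfl, smul_zero, add_zero]

lemma dependsOnPrefix_Dop (H : IsHaarSystem A μ θinv u) (hμ : ChargesCylinders μ)
    (hf : DependsOnPrefix n f) : DependsOnPrefix n (Dop A μ θinv u f) := fun ω υ h => by
  rw [H.Dop_eq_sum hμ hf, H.Dop_eq_sum hμ hf]
  exact Finset.sum_congr rfl fun k hk =>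
    (dependsOnPrefix_diracWeight_smul_cylDiff μ f k).mono (Finset.mem_range.1 hk) h

lemma cylDiff_Dop (H : IsHaarSystem A μ θinv u) (hμ : ChargesCylinders μ)
    (hf : DependsOnPrefix n f) (k : ℕ) (ω : SigmaA l A) :
    cylDiff μ k (Dop A μ θinv u f) ω = diracWeight μ k ω • cylDiff μ k f ω := by
  rw [funext (H.Dop_eq_sum hμ hf), cylDiff_finset_sum _ fun i _ =>
    (dependsOnPrefix_diracWeight_smul_cylDiff μ f i).integrable μ]
  simp only [cylDiff_smul_cylDiff hμ (hf.integrable μ) (dependsOnPrefix_diracWeight μ _),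
    Finset.sum_ite_eq, Finset.mem_range, ite_eq_left_iff, not_lt]
  exact fun hnk => by rw [cylDiff_eq_zero hμ hf hnk, smul_zero]

lemma eLpNorm_Dop_le_one (H : IsHaarSystem A μ θinv u) (hμ : ChargesCylinders μ)
    (hcomm : ∀ h ∈ H0 A, eLpNorm (fun ω => Dop A μ θinv u (fun ω' => f ω' * h ω') ω
      - f ω * Dop A μ θinv u h ω) 2 μ ≤ eLpNorm h 2 μ) :
    eLpNorm (Dop A μ θinv u f) 2 μ ≤ 1 := by
  have hone : (fun _ => 1) ∈ H0 A :=
    Submodule.subset_span ⟨[], .inl rfl, by simp [indC, cylinder_nil, Pi.one_def]⟩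
  have hDone : Dop A μ θinv u (fun _ => 1) = 0 := funext fun ω =>
    H.Dop_eq_sum (n := 0) hμ (fun _ _ _ => rfl) ω
  have hnorm : eLpNorm (fun _ : SigmaA l A => (1 : ℂ)) 2 μ = 1 := by
    rw [eLpNorm_const _ two_ne_zero (IsProbabilityMeasure.ne_zero μ)]
    simp
  simpa [hDone, hnorm] using hcomm _ hone

lemma inv_mul_norm_cylDiff_le (H : IsHaarSystem A μ θinv u) (hμ : ChargesCylinders μ)
    (hf : Integrable f μ) (k : ℕ) (ω : SigmaA l A) :
    (μ.real (cylinderAt ω k))⁻¹ * ‖cylDiff μ k f ω‖ ≤ ‖diracWeight μ k ω • cylDiff μ k f ω‖ := by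
  rcases k with _ | k
  · simp [diracWeight, cylinderAt_zero]
  rw [norm_smul, diracWeight, if_neg k.succ_ne_zero]
  rcases le_or_gt (alpha A (wordPrefix ω (k + 1))) 1 with hα | hα
  · have hzero : cylDiff μ (k + 1) f ω = 0 := by
      rw [← H.haarProj_wordPrefix hμ hf, haarProj, Nat.sub_eq_zero_of_le hα, Finset.range_zero,
        Finset.sum_empty]
    simp [hzero]
  · have hα' : (2 : ℝ) ≤ alpha A (wordPrefix ω (k + 1)) := by exact_mod_cast hα
    gcongr
    rw [div_eq_mul_inv, norm_mul, norm_inv, Real.norm_of_nonneg measureReal_nonneg]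
    exact le_mul_of_one_le_left (by positivity) (le_trans (by linarith) (Real.le_norm_self _))

lemma norm_cylDiff_le (H : IsHaarSystem A μ θinv u) (hμ : ChargesCylinders μ)
    (hf : DependsOnPrefix n f) (hD : eLpNorm (Dop A μ θinv u f) 2 μ ≤ 1) {δ : ℝ} (hδ : 0 < δ)
    {ω : SigmaA l A} (hmass : δ * μ.real (cylinderAt ω k) ≤ μ.real (cylinderAt ω (k + 1))) :
    ‖cylDiff μ k f ω‖ ≤ 2 * (√δ)⁻¹ * √(μ.real (cylinderAt ω k)) := by
  have hpos := hμ ω k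
  have hbound :=
    calc (μ.real (cylinderAt ω k))⁻¹ * ‖cylDiff μ k f ω‖
        ≤ ‖cylDiff μ k (Dop A μ θinv u f) ω‖ := by
          rw [H.cylDiff_Dop hμ hf]
          exact H.inv_mul_norm_cylDiff_le hμ (hf.integrable μ) k ω
      _ ≤ 2 * (√(μ.real (cylinderAt ω (k + 1))))⁻¹ :=
          norm_cylDiff_le_of_eLpNorm_le_one hμ ((H.dependsOnPrefix_Dop hμ hf).memLp μ 2) hD k ω
      _ ≤ 2 * (√(δ * μ.real (cylinderAt ω k)))⁻¹ := by gcongr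
  rw [inv_mul_le_iff₀ hpos, Real.sqrt_mul hδ.le] at hbound
  refine hbound.trans_eq ?_
  rw [mul_inv]
  linear_combination 2 * (√δ)⁻¹ * Real.div_sqrt (x := μ.real (cylinderAt ω k))

end IsHaarSystem

end Dirac

section Gibbs

variable {A : Matrix (Fin l) (Fin l) ℕ} {μ : Measure (SigmaA l A)} {φ : SigmaA l A → ℝ}

/-- Each cylinder passes a fixed proportion of its mass to each of its children; for the metric
of `Σ_A` this is the doubling property of `μ`. -/
def CylinderDoubling (μ : Measure (SigmaA l A)) : Prop :=
  ∃ δ > 0, ∀ ω k, δ * μ.real (cylinderAt ω k) ≤ μ.real (cylinderAt ω (k + 1))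

/-- Each cylinder splits after a number of steps that does not depend on the cylinder. -/
def UniformlyBranching (A : Matrix (Fin l) (Fin l) ℕ) : Prop :=
  ∃ n, ∀ (ω : SigmaA l A) k, ∃ υ ∈ cylinderAt ω k, υ ∉ cylinderAt ω (k + n)

lemma HolderCont.bddBelow_range (hφ : HolderCont φ) : BddBelow (Set.range φ) := by
  rcases isEmpty_or_nonempty (SigmaA l A) with _ | ⟨⟨ω₀⟩⟩
  · exact Set.range_eq_empty φ ▸ bddBelow_empty
  obtain ⟨C, s, -, h⟩ := hφ
  refine ⟨φ ω₀ - C, Set.forall_mem_range.2 fun ω => ?_⟩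
  have hdist : |φ ω₀ - φ ω| ≤ C := by simpa using h ω₀ ω 0 (by simp)
  linarith [le_abs_self (φ ω₀ - φ ω)]

lemma IsGibbs.cylinderDoubling [IsProbabilityMeasure μ] {P : ℝ} (hG : IsGibbs φ P μ)
    (hφ : BddBelow (Set.range φ)) : CylinderDoubling μ := by
  obtain ⟨B, hB⟩ := hφ
  obtain ⟨c, hc, h⟩ := hG
  have : 0 < c := one_pos.trans hc
  have hlower (ω : SigmaA l A) (k : ℕ) :
      c⁻¹ * Real.exp (birkhoff φ (k + 1) ω - (k + 1 : ℕ) * P) ≤ μ.real (cylinderAt ω (k + 1)) :=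
    (le_div_iff₀ (Real.exp_pos _)).1 (h ω (k + 1) k.succ_pos).1
  have hupper (ω : SigmaA l A) (k : ℕ) :
      μ.real (cylinderAt ω k) ≤ c * Real.exp (birkhoff φ k ω - k * P) := by
    rcases k.eq_zero_or_pos with rfl | hk
    · simpa [cylinderAt_zero, birkhoff] using hc.le
    · exact (div_le_iff₀ (Real.exp_pos _)).1 (h ω k hk).2
  refine ⟨c⁻¹ * c⁻¹ * Real.exp (B - P), by positivity, fun ω k => ?_⟩
  have hB' : B ≤ φ (shift^[k] ω) := hB ⟨_, rfl⟩
  have hcocycle : birkhoff φ (k + 1) ω - (k + 1 : ℕ) * P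
      = (φ (shift^[k] ω) - P) + (birkhoff φ k ω - k * P) := by
    rw [birkhoff, Finset.sum_range_succ, birkhoff]
    push_cast
    ring
  calc c⁻¹ * c⁻¹ * Real.exp (B - P) * μ.real (cylinderAt ω k)
      ≤ c⁻¹ * c⁻¹ * Real.exp (φ (shift^[k] ω) - P) *
        (c * Real.exp (birkhoff φ k ω - k * P)) := by
        gcongr
        exact hupper ω k
    _ = c⁻¹ * Real.exp (birkhoff φ (k + 1) ω - (k + 1 : ℕ) * P) := by
        rw [hcocycle, Real.exp_add]
        field_simp
    _ ≤ μ.real (cylinderAt ω (k + 1)) := hlower ω k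

lemma exists_cons {i : Fin l} (υ : SigmaA l A) (h : A i (υ.1 0) = 1) :
    ∃ τ : SigmaA l A, τ.1 0 = i ∧ ∀ k, τ.1 (k + 1) = υ.1 k :=
  ⟨⟨fun k => Nat.casesOn k i υ.1, fun k => Nat.casesOn k h υ.2⟩, rfl, fun _ => rfl⟩

lemma exists_splice (ω υ : SigmaA l A) (k : ℕ) (h : υ.1 0 = ω.1 k) :
    ∃ τ : SigmaA l A, (∀ i ≤ k, τ.1 i = ω.1 i) ∧ ∀ i, τ.1 (k + i) = υ.1 i := by
  induction k generalizing ω with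
  | zero => exact ⟨υ, fun i hi => by rwa [Nat.le_zero.1 hi], fun i => by rw [zero_add]⟩
  | succ k ih =>
    obtain ⟨ρ, hρω, hρυ⟩ := ih (shift ω) h
    have hρ0 : ρ.1 0 = ω.1 1 := hρω 0 k.zero_le
    obtain ⟨τ, hτ0, hτ⟩ := exists_cons ρ (i := ω.1 0) (by rw [hρ0]; exact ω.2 0)
    refine ⟨τ, fun i hi => ?_, fun i => ?_⟩
    · cases i with
      | zero => exact hτ0
      | succ i => exact (hτ i).trans (hρω i (Nat.le_of_succ_le_succ hi))
    · rw [Nat.add_right_comm, hτ, hρυ]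

lemma exists_path_of_pow_pos (h01 : ∀ i j, A i j = 0 ∨ A i j = 1) (hsucc : ∀ i, ∃ j, A i j = 1)
    {n : ℕ} {i j : Fin l} (h : 0 < (A ^ n) i j) : ∃ υ : SigmaA l A, υ.1 0 = i ∧ υ.1 n = j := by
  induction n generalizing i with
  | zero =>
    have hij : i = j := by
      by_contra hne
      simp [hne] at h
    choose s hs using hsucc
    refine ⟨⟨fun k => s^[k] i, fun k => ?_⟩, rfl, hij⟩
    simpa only [Function.iterate_succ_apply'] using hs (s^[k] i)
  | succ n ih =>
    rw [pow_succ', Matrix.mul_apply] at h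
    obtain ⟨b, -, hb⟩ := Finset.exists_ne_zero_of_sum_ne_zero h.ne'
    obtain ⟨υ, rfl, hυn⟩ := ih (Nat.pos_of_ne_zero (right_ne_zero_of_mul hb))
    obtain ⟨τ, hτ0, hτ⟩ := exists_cons υ ((h01 i _).resolve_left (left_ne_zero_of_mul hb))
    exact ⟨τ, hτ0, (hτ n).trans hυn⟩

namespace Primitive

lemma exists_succ (hA : Primitive A) (i : Fin l) : ∃ j, A i j = 1 := by
  obtain ⟨h01, n, hn, hpos⟩ := hA
  have h := hpos i i
  rw [← Nat.sub_add_cancel hn, pow_succ', Matrix.mul_apply] at h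
  obtain ⟨b, -, hb⟩ := Finset.exists_ne_zero_of_sum_ne_zero h.ne'
  exact ⟨b, (h01 i b).resolve_left (left_ne_zero_of_mul hb)⟩

lemma uniformlyBranching (hA : Primitive A) (hl : 2 ≤ l) : UniformlyBranching A := by
  have : Nontrivial (Fin l) := Fin.nontrivial_iff_two_le.2 hl
  obtain ⟨n, -, hpos⟩ := hA.2
  refine ⟨n + 1, fun ω k => ?_⟩
  obtain ⟨b, hb⟩ := exists_ne (ω.1 (k + n))
  obtain ⟨υ, hυ0, hυn⟩ := exists_path_of_pow_pos hA.1 hA.exists_succ (hpos (ω.1 k) b)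
  obtain ⟨τ, hτω, hτυ⟩ := exists_splice ω υ k hυ0
  refine ⟨τ, mem_cylinderAt.2 (wordPrefix_eq_iff.2 fun i hi => hτω i hi.le), fun hτ => hb ?_⟩
  rw [← hυn, ← hτυ]
  exact wordPrefix_eq_iff.1 (mem_cylinderAt.1 hτ) (k + n) (by omega)

end Primitive

lemma bddAbove_range_sqrt_measureReal_cylinderAt (μ : Measure (SigmaA l A)) [IsFiniteMeasure μ]
    (k : ℕ) : BddAbove (Set.range fun ω => √(μ.real (cylinderAt ω k))) :=
  ⟨√(μ.real Set.univ), Set.forall_mem_range.2 fun _ =>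
    Real.sqrt_le_sqrt (measureReal_mono (Set.subset_univ _))⟩

namespace CylinderDoubling

variable [IsProbabilityMeasure μ]

lemma chargesCylinders (hμ : CylinderDoubling μ) : ChargesCylinders μ := fun ω k => by
  obtain ⟨δ, hδ, h⟩ := hμ
  induction k with
  | zero => simp [cylinderAt_zero]
  | succ k ih => exact (mul_pos hδ ih).trans_le (h ω k)

lemma exists_decay (hμ : CylinderDoubling μ) (hA : UniformlyBranching A) :
    ∃ r < 1, ∃ n, ∀ ω k, μ.real (cylinderAt ω (n + k)) ≤ r * μ.real (cylinderAt ω k) := by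
  obtain ⟨δ, hδ, h⟩ := hμ
  obtain ⟨n, hn⟩ := hA
  have hpow (ω : SigmaA l A) (k j : ℕ) :
      δ ^ j * μ.real (cylinderAt ω k) ≤ μ.real (cylinderAt ω (k + j)) := by
    induction j with
    | zero => simp
    | succ j ih =>
      calc δ ^ (j + 1) * μ.real (cylinderAt ω k) = δ * (δ ^ j * μ.real (cylinderAt ω k)) := by ring
        _ ≤ δ * μ.real (cylinderAt ω (k + j)) := by gcongr
        _ ≤ μ.real (cylinderAt ω (k + (j + 1))) := h ω (k + j)
  refine ⟨1 - δ ^ n, sub_lt_self 1 (pow_pos hδ n), n, fun ω k => ?_⟩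
  obtain ⟨υ, hυ, hυ'⟩ := hn ω k
  have heq : cylinderAt υ k = cylinderAt ω k := by
    rw [cylinderAt, mem_cylinderAt.1 hυ, cylinderAt]
  have hdisj : Disjoint (cylinderAt ω (n + k)) (cylinderAt υ (n + k)) :=
    Set.disjoint_left.2 fun τ hτ hτ' => hυ' <| mem_cylinderAt.2 <| by
      rw [add_comm k, ← mem_cylinderAt.1 hτ', mem_cylinderAt.1 hτ]
  have hunion : cylinderAt ω (n + k) ∪ cylinderAt υ (n + k) ⊆ cylinderAt ω k :=
    Set.union_subset (cylinderAt_subset ω (Nat.le_add_left k n))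
      (heq ▸ cylinderAt_subset υ (Nat.le_add_left k n))
  have hmass := measureReal_mono (μ := μ) hunion
  rw [measureReal_union hdisj (measurableSet_cylinderAt υ _)] at hmass
  have hυn := hpow υ k n
  rw [heq, add_comm k] at hυn
  linarith

lemma summable_iSup_sqrt (hμ : CylinderDoubling μ) (hA : UniformlyBranching A) :
    Summable fun k => ⨆ ω, √(μ.real (cylinderAt ω k)) := by
  have : Nonempty (SigmaA l A) := nonempty_of_isProbabilityMeasure μ
  obtain ⟨r, hr, n, h⟩ := hμ.exists_decay hA
  have hr' : √r < 1 := (Real.sqrt_lt' one_pos).2 (by simpa using hr)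
  refine summable_of_add_le_mul (n := n) (fun k => Real.iSup_nonneg fun ω => Real.sqrt_nonneg _) hr'
    fun k => ciSup_le fun ω => ?_
  calc √(μ.real (cylinderAt ω (n + k))) ≤ √(r * μ.real (cylinderAt ω k)) :=
        Real.sqrt_le_sqrt (h ω k)
    _ = √r * √(μ.real (cylinderAt ω k)) := Real.sqrt_mul' r measureReal_nonneg
    _ ≤ √r * ⨆ ω, √(μ.real (cylinderAt ω k)) := by
        gcongr
        exact le_ciSup (bddAbove_range_sqrt_measureReal_cylinderAt μ k) ω

end CylinderDoubling

end Gibbs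

section TotallyBounded

variable {A : Matrix (Fin l) (Fin l) ℕ} {μ : Measure (SigmaA l A)} {E : Type*}
  [NormedAddCommGroup E] [NormedSpace ℝ E] {f : SigmaA l A → E} {d : ℕ → ℝ} {n : ℕ}

lemma norm_sub_cylAvg_le [CompleteSpace E] [IsFiniteMeasure μ] (hμ : ChargesCylinders μ)
    (hf : DependsOnPrefix n f) (hd : Summable d) {ω : SigmaA l A}
    (hdiff : ∀ k, ‖cylDiff μ k f ω‖ ≤ d k) (N : ℕ) :
    ‖f ω - cylAvg μ N f ω‖ ≤ ∑' k, d (k + N) := by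
  have hlim : Tendsto (fun k => cylAvg μ k f ω) atTop (nhds (f ω)) :=
    tendsto_const_nhds.congr' <| eventually_atTop.2
      ⟨n, fun k hk => (cylAvg_eq_self hμ hf hk ω).symm⟩
  rw [← dist_eq_norm, dist_comm]
  simpa only [add_comm] using dist_le_tsum_of_dist_le_of_tendsto d
    (fun k => by rw [dist_comm, dist_eq_norm]; exact hdiff k) hd hlim N

lemma norm_cylAvg_le_sum [IsProbabilityMeasure μ] (hmean : ∫ ω, f ω ∂μ = 0) {ω : SigmaA l A}
    (hdiff : ∀ k, ‖cylDiff μ k f ω‖ ≤ d k) (N : ℕ) :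
    ‖cylAvg μ N f ω‖ ≤ ∑ k ∈ Finset.range N, d k := by
  have h := dist_le_range_sum_of_dist_le (f := fun k => cylAvg μ k f ω) (d := d) N
    fun {k} _ => by rw [dist_comm, dist_eq_norm]; exact hdiff k
  rwa [cylAvg_zero, hmean, dist_zero_left] at h

lemma exists_finset_net_of_norm_cylDiff_le [ProperSpace E] [IsProbabilityMeasure μ]
    (hμ : ChargesCylinders μ) (hd : Summable d) {ε : ℝ} (hε : 0 < ε) :
    ∃ t : Finset (SigmaA l A → E), ∀ f n, DependsOnPrefix n f → ∫ ω, f ω ∂μ = 0 →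
      (∀ ω k, ‖cylDiff μ k f ω‖ ≤ d k) → ∃ b ∈ t, ∀ ω, ‖f ω - b ω‖ ≤ ε := by
  obtain ⟨N, hN⟩ := ((tendsto_sum_nat_add d).eventually_lt_const (half_pos hε)).exists
  obtain ⟨t, ht⟩ := exists_finset_net_of_factorsThrough (finite_range_wordPrefix A N)
    (isCompact_closedBall (0 : E) (∑ k ∈ Finset.range N, d k)).totallyBounded (half_pos hε)
  refine ⟨t, fun f n hf hmean hdiff => ?_⟩
  obtain ⟨b, hb, hfb⟩ := ht (cylAvg μ N f) (dependsOnPrefix_cylAvg μ N f) fun ω =>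
    mem_closedBall_zero_iff.2 (norm_cylAvg_le_sum hmean (hdiff ω) N)
  refine ⟨b, hb, fun ω => ?_⟩
  calc ‖f ω - b ω‖ ≤ ‖f ω - cylAvg μ N f ω‖ + ‖cylAvg μ N f ω - b ω‖ :=
        norm_sub_le_norm_sub_add_norm_sub _ _ _
    _ ≤ ε / 2 + ε / 2 :=
        add_le_add ((norm_sub_cylAvg_le hμ hf hd (hdiff ω) N).trans hN.le)
          (dist_eq_norm (cylAvg μ N f ω) (b ω) ▸ (hfb ω).le)
    _ = ε := add_halves ε

theorem lipschitz_ball_totallyBounded_general {θinv : List (Fin l) → ℕ → Fin l}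
    {u : List (Fin l) → ℕ → ℕ → ℝ} [IsProbabilityMeasure μ] (H : IsHaarSystem A μ θinv u)
    (hμ : CylinderDoubling μ) (hsum : Summable fun k => ⨆ ω, √(μ.real (cylinderAt ω k)))
    {ε : ℝ} (hε : 0 < ε) :
    ∃ t : Finset (SigmaA l A → ℂ), ∀ a ∈ H0 A, ∫ ω, a ω ∂μ = 0 →
      eLpNorm (Dop A μ θinv u a) 2 μ ≤ 1 → ∃ b ∈ t, ∀ ω, ‖a ω - b ω‖ ≤ ε := by
  have hcharges := hμ.chargesCylinders
  obtain ⟨δ, hδ, hchild⟩ := hμ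
  obtain ⟨t, ht⟩ := exists_finset_net_of_norm_cylDiff_le (E := ℂ) hcharges
    (hsum.mul_left (2 * (√δ)⁻¹)) hε
  refine ⟨t, fun a ha hmean hDa => ?_⟩
  obtain ⟨n, hn⟩ := exists_dependsOnPrefix_of_mem_H0 ha
  refine ht a n hn hmean fun ω k =>
    (H.norm_cylDiff_le hcharges hn hDa hδ (hchild ω k)).trans ?_
  gcongr
  exact le_ciSup (bddAbove_range_sqrt_measureReal_cylinderAt μ k) ω

end TotallyBounded

/-- The set of `a ∈ H₀` with `∫ a dμ = 0` and `‖[D, π(a)]‖ ≤ 1` on `H₀`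
is totally bounded in the supremum norm: for every `ε > 0` there is a finite `ε`-net. -/
theorem lipschitz_ball_totallyBounded
    (hl : 2 ≤ l) (A : Matrix (Fin l) (Fin l) ℕ) (hA : Primitive A)
    (φ : SigmaA l A → ℝ) (hφ : HolderCont φ) (P : ℝ)
    (μ : Measure (SigmaA l A)) [IsProbabilityMeasure μ] (hGibbs : IsGibbs φ P μ)
    (θinv : List (Fin l) → ℕ → Fin l)
    (hθ : ∀ (x : List (Fin l)) (hx : Admissible A x),
      Set.BijOn (θinv x) (Set.Iio (alpha A x)) {y : Fin l | A (x.getLast hx.1) y = 1})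
    (u : List (Fin l) → ℕ → ℕ → ℝ)
    (hu_orth : ∀ x, Admissible A x → ∀ j < alpha A x, ∀ j' < alpha A x,
      ∑ m ∈ Finset.range (alpha A x), u x m j * u x m j' = if j = j' then 1 else 0)
    (hu_last : ∀ x, Admissible A x → ∀ m < alpha A x,
      u x m (alpha A x - 1) =
        (Real.sqrt ((μ (cylinder A x)).toReal))⁻¹ *
          Real.sqrt ((μ (cylinder A (child θinv x m))).toReal)) :
    ∀ ε : ℝ, 0 < ε → ∃ t : Finset (SigmaA l A → ℂ), ∀ a ∈ H0 A, (∫ ω, a ω ∂μ) = 0 →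
      (∀ h ∈ H0 A,
      eLpNorm (fun ω => Dop A μ θinv u (fun ω' => a ω' * h ω') ω - a ω * Dop A μ θinv u h ω) 2 μ
        ≤ eLpNorm h 2 μ) →
      ∃ b ∈ t, ∀ ω : SigmaA l A, ‖a ω - b ω‖ ≤ ε := by
  intro ε hε
  have H : IsHaarSystem A μ θinv u := ⟨hθ, hu_orth, hu_last⟩
  have hμ : CylinderDoubling μ := hGibbs.cylinderDoubling hφ.bddBelow_range
  obtain ⟨t, ht⟩ := lipschitz_ball_totallyBounded_general H hμ
    (hμ.summable_iSup_sqrt (hA.uniformlyBranching hl)) hε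
  exact ⟨t, fun a ha hmean hcomm =>
    ht a ha hmean (H.eLpNorm_Dop_le_one hμ.chargesCylinders hcomm)⟩

end SFT
end

section
/- Let φ : Σ_A → ℝ be d-Hölder continuous. Then there exist a Borel probability measure μ on Σ_A, a real number P, and a constant c > 1 such that c^{−1} ≤ μ([(ω_1,…,ω_k)]) / exp(S_kφ(ω) − kP) ≤ c for all ω ∈ Σ_A and k ∈ ℕ; moreover μ can be chosen σ-invariant, i.e. there exists a σ-invariant Gibbs measure for φ. -/
open MeasureTheory Filter
open scoped ENNReal NNReal

namespace SFT

variable {l : ℕ}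

/-!
Give a point `y ∈ σ⁻ᵐ{x}` the weight `exp (S_m φ y)` and normalise. All weights of points of a
cylinder of length `m` agree up to a constant (Bowen's condition), and by primitivity every cylinder
`[ω₁ … ω_k]` contains preimages of `x` of every order `m ≥ k + N`. Hence the total masses `Z_m` are,
up to a constant, multiplicative in `m` and independent of `x`, so `Z_m ≍ exp (m P)` for some `P`.
Splitting the orbit into the pieces before, inside and after the window `[j, j + k)` then shows that
`σ⁻ʲ[ω₁ … ω_k]` has mass `≍ exp (S_k φ ω) / Z_k ≍ exp (S_k φ ω - k P)`, with constants that do not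
depend on `j`. These bounds pass to a weak limit `ν` as `m → ∞`, and from `ν` to every weak limit of
the means of the push-forwards `σʲ_* ν`, which is moreover invariant.
-/

open Topology

section QuasiAdditive

theorem exists_forall_abs_sub_mul_le {u : ℕ → ℝ} {d : ℝ}
    (h : ∀ m n, |u (m + n) - u m - u n| ≤ d) : ∃ P : ℝ, ∀ n : ℕ, |u n - n * P| ≤ d := by
  have h_mul (n k : ℕ) : |u ((k + 1) * n) - (k + 1) * u n| ≤ k * d := by
    induction k with
    | zero => simp
    | succ k ih =>
      have h_step := h ((k + 1) * n) n
      rw [← Nat.succ_mul] at h_step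
      push_cast
      rw [abs_le] at *
      constructor <;> linarith
  have h_slope (m n : ℕ) : (u (m + 1) - d) / (m + 1) ≤ (u (n + 1) + d) / (n + 1) := by
    have hm := h_mul (n + 1) m
    have hn := h_mul (m + 1) n
    rw [mul_comm (n + 1)] at hn
    rw [div_le_div_iff₀ (by positivity) (by positivity)]
    rw [abs_le] at hm hn
    linarith [(abs_nonneg _).trans (h 0 0)]
  obtain ⟨P, hP, hP'⟩ := exists_between_of_forall_le (Set.range_nonempty _) (Set.range_nonempty _)
    (Set.forall_mem_range.2 fun m => Set.forall_mem_range.2 (h_slope m))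
  refine ⟨P, fun n => ?_⟩
  cases n with
  | zero => simpa using h 0 0
  | succ n =>
    have h_lower := (div_le_iff₀ (by positivity)).1 (hP (Set.mem_range_self n))
    have h_upper := (le_div_iff₀ (by positivity)).1 (hP' (Set.mem_range_self n))
    push_cast
    rw [abs_le]
    constructor <;> linarith

theorem exists_forall_le_mul_exp {z : ℕ → ℝ} {D : ℝ} (hz : ∀ n, 0 < z n)
    (h_le : ∀ m n, z (m + n) ≤ D * (z m * z n)) (h_ge : ∀ m n, z m * z n ≤ D * z (m + n)) :
    ∃ P : ℝ, ∀ n : ℕ, z n ≤ D * Real.exp (n * P) ∧ Real.exp (n * P) ≤ D * z n := by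
  have hD : 0 < D := pos_of_mul_pos_left ((hz _).trans_le (h_le 0 0)) (mul_pos (hz 0) (hz 0)).le
  obtain ⟨P, hP⟩ := exists_forall_abs_sub_mul_le (u := fun n => Real.log (z n)) (d := Real.log D)
    fun m n => by
      have h₁ := Real.log_le_log (hz _) (h_le m n)
      have h₂ := Real.log_le_log (mul_pos (hz m) (hz n)) (h_ge m n)
      rw [Real.log_mul hD.ne' (by have := hz m; have := hz n; positivity),
        Real.log_mul (hz m).ne' (hz n).ne'] at h₁
      rw [Real.log_mul hD.ne' (hz _).ne', Real.log_mul (hz m).ne' (hz n).ne'] at h₂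
      rw [abs_le]
      constructor <;> linarith
  refine ⟨P, fun n => ?_⟩
  have h_abs := abs_le.1 (hP n)
  rw [← Real.log_le_log_iff (hz n) (by positivity), ← Real.log_le_log_iff (by positivity)
    (mul_pos hD (hz n)), Real.log_mul hD.ne' (by positivity), Real.log_mul hD.ne' (hz n).ne',
    Real.log_exp]
  constructor <;> linarith

end QuasiAdditive

section Comparable

/-- The relation `a ≍ b` with an explicit constant: `a` and `b` differ by a factor of at most `C`.
The constant is finite, and the division-free form keeps the values `0` and `∞` harmless. -/
def Comparable (C : ℝ≥0) (a b : ℝ≥0∞) : Prop :=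
  a ≤ C * b ∧ b ≤ C * a

variable {C D : ℝ≥0} {a b c : ℝ≥0∞}

theorem Comparable.symm (h : Comparable C a b) : Comparable C b a := And.symm h

theorem Comparable.trans (h : Comparable C a b) (h' : Comparable D b c) :
    Comparable (C * D) a c := by
  rw [Comparable, ENNReal.coe_mul]
  constructor
  · calc a ≤ C * b := h.1
      _ ≤ C * (D * c) := by gcongr; exact h'.1
      _ = C * D * c := by ring
  · calc c ≤ D * b := h'.2
      _ ≤ D * (C * a) := by gcongr; exact h.2
      _ = C * D * a := by ring

theorem Comparable.mul_left (c : ℝ≥0∞) (h : Comparable C a b) : Comparable C (c * a) (c * b) := by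
  rw [Comparable, mul_left_comm, mul_left_comm _ c]
  exact ⟨by gcongr; exact h.1, by gcongr; exact h.2⟩

theorem Comparable.of_mul_left (hc : c ≠ 0) (hc' : c ≠ ∞) (h : Comparable C (c * a) (c * b)) :
    Comparable C a b := by
  rwa [Comparable, mul_left_comm, mul_left_comm _ c, ENNReal.mul_le_mul_iff_right hc hc',
    ENNReal.mul_le_mul_iff_right hc hc'] at h

theorem comparable_iff_mem_Icc : Comparable C a b ↔ a ∈ Set.Icc (b / C) (C * b) := by
  rw [Comparable, Set.mem_Icc, and_comm (a := b / C ≤ a)]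
  refine and_congr_right fun ha => ?_
  rcases eq_or_ne C 0 with rfl | hC
  · obtain rfl : a = 0 := by simpa using ha
    rcases eq_or_ne b 0 with rfl | hb <;> simp [ENNReal.div_zero, *]
  · rw [ENNReal.div_le_iff' (by simpa) (by simp)]

theorem comparable_exp {K s t : ℝ} (h : |s - t| ≤ K) :
    Comparable (Real.exp K).toNNReal (ENNReal.ofReal (Real.exp s))
      (ENNReal.ofReal (Real.exp t)) := by
  rw [abs_le] at h
  have h_le {s t : ℝ} (hst : s ≤ K + t) : ENNReal.ofReal (Real.exp s) ≤
      (Real.exp K).toNNReal * ENNReal.ofReal (Real.exp t) := by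
    rw [← ENNReal.ofReal, ← ENNReal.ofReal_mul (Real.exp_pos _).le, ← Real.exp_add]
    gcongr
  exact ⟨h_le (by linarith), h_le (by linarith)⟩

theorem exists_comparable_exp {z : ℕ → ℝ≥0∞} (hz : ∀ n, z n ≠ 0) (hz' : ∀ n, z n ≠ ∞)
    (h : ∀ m n, Comparable C (z (m + n)) (z m * z n)) :
    ∃ P : ℝ, ∀ n : ℕ, Comparable C (z n) (ENNReal.ofReal (Real.exp (n * P))) := by
  lift z to ℕ → ℝ≥0 using hz'
  beta_reduce at h
  obtain ⟨P, hP⟩ := exists_forall_le_mul_exp (z := fun n => z n) (D := C)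
    (fun n => NNReal.coe_pos.2 (by simpa [pos_iff_ne_zero] using hz n))
    (fun m n => by exact_mod_cast (h m n).1) (fun m n => by exact_mod_cast (h m n).2)
  refine ⟨P, fun n => ?_⟩
  lift Real.exp (n * P) to ℝ≥0 using (Real.exp_pos _).le with e he
  have := hP n
  rw [← he] at this
  rw [ENNReal.ofReal_coe_nnreal]
  exact ⟨by exact_mod_cast this.1, by exact_mod_cast this.2⟩

end Comparable

section KrylovBogolyubov

variable {X : Type*} [MeasurableSpace X]

/-- The Cesàro mean of the push-forwards of `ν` under the first `n + 1` iterates of `T`, whose limit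
points are `T`-invariant. -/
noncomputable def cesaroMean (T : X → X) (ν : Measure X) (n : ℕ) :
    Measure X :=
  (n + 1 : ℝ≥0∞)⁻¹ • ∑ j ∈ Finset.range (n + 1), ν.map T^[j]

theorem cesaroMean_mem_Icc {T : X → X} (hT : Measurable T)
    {ν : Measure X} {B : Set X} (hB : MeasurableSet B) {a b : ℝ≥0∞}
    (h : ∀ j, ν (T^[j] ⁻¹' B) ∈ Set.Icc a b) (n : ℕ) : cesaroMean T ν n B ∈ Set.Icc a b := by
  have h_const (c : ℝ≥0∞) : (n + 1 : ℝ≥0∞)⁻¹ * ∑ _j ∈ Finset.range (n + 1), c = c := by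
    rw [Finset.sum_const, Finset.card_range, nsmul_eq_mul, ← mul_assoc, Nat.cast_add_one,
      ENNReal.inv_mul_cancel (by simp) (by finiteness), one_mul]
  have h_apply : cesaroMean T ν n B =
      (n + 1 : ℝ≥0∞)⁻¹ * ∑ j ∈ Finset.range (n + 1), ν (T^[j] ⁻¹' B) := by
    simp [cesaroMean, Measure.map_apply (hT.iterate _) hB]
  rw [h_apply]
  constructor
  · refine (h_const a).symm.trans_le ?_
    gcongr
    exact (h _).1
  · refine le_of_le_of_eq ?_ (h_const b)
    gcongr
    exact (h _).2

theorem isProbabilityMeasure_cesaroMean {T : X → X} (hT : Measurable T) (ν : Measure X)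
    [IsProbabilityMeasure ν] (n : ℕ) :
    IsProbabilityMeasure (cesaroMean T ν n) :=
  ⟨by simpa using cesaroMean_mem_Icc hT .univ (a := 1) (b := 1) (by simp) n⟩

variable [TopologicalSpace X] [BorelSpace X]

theorem measure_mem_Icc_of_tendsto [HasOuterApproxClosed X] {ι : Type*} {F : Filter ι} [F.NeBot]
    {μs : ι → ProbabilityMeasure X} {μ : ProbabilityMeasure X} (hμ : Tendsto μs F (𝓝 μ))
    {B : Set X} (hB : IsClopen B) {a b : ℝ≥0∞}
    (h : ∀ᶠ i in F, (μs i : Measure X) B ∈ Set.Icc a b) : (μ : Measure X) B ∈ Set.Icc a b :=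
  isClosed_Icc.mem_of_tendsto
    (ProbabilityMeasure.tendsto_measure_of_null_frontier_of_tendsto' hμ (by simp [hB.frontier_eq]))
    h

open scoped BoundedContinuousFunction in
theorem integral_comp_sub_integral_cesaroMean {T : X → X} (hT : Continuous T) (ν : Measure X)
    [IsFiniteMeasure ν] (f : X →ᵇ ℝ) (n : ℕ) :
    ∫ x, f (T x) ∂cesaroMean T ν n - ∫ x, f x ∂cesaroMean T ν n =
      (n + 1 : ℝ)⁻¹ * (∫ x, f (T^[n + 1] x) ∂ν - ∫ x, f x ∂ν) := by
  have h_integral (g : X →ᵇ ℝ) : ∫ x, g x ∂cesaroMean T ν n =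
      (n + 1 : ℝ)⁻¹ * ∑ j ∈ Finset.range (n + 1), ∫ x, g (T^[j] x) ∂ν := by
    rw [cesaroMean, integral_smul_measure, integral_finsetSum_measure fun j _ => g.integrable _]
    simp only [integral_map (hT.iterate _).measurable.aemeasurable
      g.continuous.measurable.aestronglyMeasurable]
    simp [ENNReal.toReal_add]
  have h_comp := h_integral (f.compContinuous ⟨T, hT⟩)
  simp only [BoundedContinuousFunction.compContinuous_apply, ContinuousMap.coe_mk,
    ← Function.iterate_succ_apply' T] at h_comp
  rw [h_comp, h_integral f, ← mul_sub, ← Finset.sum_sub_distrib]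
  exact congrArg _ (Finset.sum_range_sub (fun j => ∫ x, f (T^[j] x) ∂ν) (n + 1))

theorem measurePreserving_of_tendsto_cesaroMean [HasOuterApproxClosed X] {T : X → X}
    (hT : Continuous T) (ν : Measure X) [IsProbabilityMeasure ν] {F : Filter ℕ} [F.NeBot]
    (hF : F ≤ atTop) {μs : ℕ → ProbabilityMeasure X} (hμs : ∀ n, μs n = cesaroMean T ν n)
    {μ : ProbabilityMeasure X} (hμ : Tendsto μs F (𝓝 μ)) : MeasurePreserving T μ μ := by
  refine ⟨hT.measurable, ?_⟩
  have := Measure.isProbabilityMeasure_map (μ := μ) hT.measurable.aemeasurable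
  refine ext_of_forall_integral_eq_of_IsFiniteMeasure fun f => ?_
  rw [integral_map hT.measurable.aemeasurable f.continuous.measurable.aestronglyMeasurable]
  have h_lim := ProbabilityMeasure.tendsto_iff_forall_integral_tendsto.1 hμ
  have h_diff := (h_lim (f.compContinuous ⟨T, hT⟩)).sub (h_lim f)
  have h_zero : Tendsto (fun n : ℕ => (n + 1 : ℝ)⁻¹ * (∫ x, f (T^[n + 1] x) ∂ν - ∫ x, f x ∂ν))
      F (𝓝 0) := by
    have h_bound (j : ℕ) : ‖∫ x, f (T^[j] x) ∂ν‖ ≤ ‖f‖ := by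
      simpa using norm_integral_le_of_norm_le_const (μ := ν)
        (.of_forall fun x => f.norm_coe_le_norm (T^[j] x))
    refine Tendsto.zero_mul_isBoundedUnder_le ?_ <| isBoundedUnder_of
      ⟨‖f‖ + ‖f‖, fun n => (norm_sub_le _ _).trans (add_le_add (h_bound (n + 1)) (h_bound 0))⟩
    simpa using (tendsto_one_div_add_atTop_nhds_zero_nat (𝕜 := ℝ)).mono_left hF
  refine sub_eq_zero.1 (tendsto_nhds_unique h_diff (h_zero.congr fun n => ?_))
  simp only [hμs, ← integral_comp_sub_integral_cesaroMean hT,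
    BoundedContinuousFunction.compContinuous_apply, ContinuousMap.coe_mk]

theorem exists_measurePreserving_mem_Icc [CompactSpace X] [T2Space X] [HasOuterApproxClosed X]
    {T : X → X} (hT : Continuous T) (ν : Measure X) [IsProbabilityMeasure ν] :
    ∃ μ : ProbabilityMeasure X, MeasurePreserving T μ μ ∧ ∀ B, IsClopen B → ∀ a b,
      (∀ j, ν (T^[j] ⁻¹' B) ∈ Set.Icc a b) → (μ : Measure X) B ∈ Set.Icc a b := by
  let μs (n : ℕ) : ProbabilityMeasure X :=
    ⟨cesaroMean T ν n, isProbabilityMeasure_cesaroMean hT.measurable ν n⟩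
  obtain ⟨μ, hμ⟩ := exists_clusterPt_of_compactSpace (map μs atTop)
  obtain ⟨F, hF, h_lim⟩ := mapClusterPt_iff_ultrafilter.1 hμ
  exact ⟨μ, measurePreserving_of_tendsto_cesaroMean hT ν hF (fun _ => rfl) h_lim,
    fun B hB a b h => measure_mem_Icc_of_tendsto h_lim hB <| .of_forall <|
      cesaroMean_mem_Icc hT.measurable hB.1.measurableSet h⟩

end KrylovBogolyubov

section Transfer

variable {X : Type*} (T : X → X) (φ : X → ℝ)

/-- The weight `exp (S_n φ y)` of the orbit segment of length `n` starting at `y`. -/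
noncomputable def birkhoffWeight (n : ℕ) (y : X) : ℝ≥0∞ :=
  ENNReal.ofReal (Real.exp (birkhoffSum T φ n y))

/-- The `n`-th iterate of the Ruelle transfer operator of the potential `φ`, written as a sum over
all solutions `y` of `T^[n] y = x`; at `f = 1` it is the partition function of order `n`. The values
are extended nonnegative so that no finiteness of the fibres is needed. -/
noncomputable def transfer (n : ℕ) (f : X → ℝ≥0∞) (x : X) : ℝ≥0∞ :=
  ∑' y : T^[n] ⁻¹' {x}, birkhoffWeight T φ n y * f y

theorem birkhoffWeight_ne_zero (n : ℕ) (y : X) : birkhoffWeight T φ n y ≠ 0 := by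
  simp [birkhoffWeight, Real.exp_pos]

theorem birkhoffWeight_add (m n : ℕ) (y : X) :
    birkhoffWeight T φ (m + n) y = birkhoffWeight T φ m y * birkhoffWeight T φ n (T^[m] y) := by
  rw [birkhoffWeight, birkhoffSum_add, Real.exp_add, ENNReal.ofReal_mul (Real.exp_pos _).le]
  rfl

variable {T φ}

theorem transfer_mono {n : ℕ} {f g : X → ℝ≥0∞} (h : ∀ y, f y ≤ g y) (x : X) :
    transfer T φ n f x ≤ transfer T φ n g x :=
  ENNReal.tsum_le_tsum fun y => by gcongr; exact h y

theorem transfer_const_mul (n : ℕ) (c : ℝ≥0∞) (f : X → ℝ≥0∞) (x : X) :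
    transfer T φ n (fun y => c * f y) x = c * transfer T φ n f x := by
  simp only [transfer, ← ENNReal.tsum_mul_left, mul_left_comm]

theorem transfer_le_const_mul {n : ℕ} {c : ℝ≥0∞} {f g : X → ℝ≥0∞} (h : ∀ y, f y ≤ c * g y) (x : X) :
    transfer T φ n f x ≤ c * transfer T φ n g x :=
  (transfer_mono h x).trans_eq (transfer_const_mul n c g x)

theorem comparable_transfer {C : ℝ≥0} {n : ℕ} {f g : X → ℝ≥0∞}
    (h : ∀ y, Comparable C (f y) (g y)) (x : X) :
    Comparable C (transfer T φ n f x) (transfer T φ n g x) :=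
  ⟨transfer_le_const_mul (fun y => (h y).1) x, transfer_le_const_mul (fun y => (h y).2) x⟩

theorem transfer_comp_iterate_mul (n : ℕ) (f g : X → ℝ≥0∞) (x : X) :
    transfer T φ n (fun y => f (T^[n] y) * g y) x = f x * transfer T φ n g x := by
  simp only [transfer, ← ENNReal.tsum_mul_left]
  refine tsum_congr fun ⟨y, hy⟩ => ?_
  rw [Set.mem_preimage, Set.mem_singleton_iff] at hy
  simp only [hy]
  ring

theorem transfer_add (m n : ℕ) (f : X → ℝ≥0∞) (x : X) :
    transfer T φ (m + n) f x = transfer T φ m (transfer T φ n f) x := by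
  simp only [transfer]
  rw [tsum_subtype (T^[m] ⁻¹' {x}) (fun y => birkhoffWeight T φ m y *
      ∑' z : T^[n] ⁻¹' {y}, birkhoffWeight T φ n z * f z),
    tsum_subtype (T^[m + n] ⁻¹' {x}) (fun y => birkhoffWeight T φ (m + n) y * f y),
    ← ENNReal.tsum_fiberwise _ T^[n]]
  refine tsum_congr fun y => ?_
  by_cases hy : T^[m] y = x
  · rw [Set.indicator_of_mem (by simpa using hy), ← ENNReal.tsum_mul_left]
    refine tsum_congr fun ⟨z, hz⟩ => ?_
    obtain rfl : T^[n] z = y := hz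
    rw [Set.indicator_of_mem (by simpa [Function.iterate_add_apply] using hy), add_comm m,
      birkhoffWeight_add, mul_left_comm, mul_assoc]
  · rw [Set.indicator_of_notMem (by simpa using hy), ENNReal.tsum_eq_zero]
    rintro ⟨z, hz⟩
    obtain rfl : T^[n] z = y := hz
    exact Set.indicator_of_notMem (by simpa [Function.iterate_add_apply] using hy) _

theorem birkhoffWeight_mul_le_transfer (n : ℕ) (f : X → ℝ≥0∞) (y : X) :
    birkhoffWeight T φ n y * f y ≤ transfer T φ n f (T^[n] y) :=
  ENNReal.le_tsum (⟨y, rfl⟩ : T^[n] ⁻¹' {T^[n] y})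

theorem transfer_indicator_le_of_injOn {n : ℕ} {B : Set X} (hB : Set.InjOn T^[n] B) {c : ℝ≥0∞}
    (hc : ∀ y ∈ B, birkhoffWeight T φ n y ≤ c) (x : X) :
    transfer T φ n (B.indicator 1) x ≤ c := by
  by_cases h : ∃ y ∈ B, T^[n] y = x
  · obtain ⟨y, hy, hyx⟩ := h
    rw [transfer, tsum_eq_single ⟨y, hyx⟩]
    · simpa [hy] using hc y hy
    · rintro ⟨z, hz⟩ hzy
      have : z ∉ B := fun hzB => hzy (Subtype.ext (hB hzB hy (hz.trans hyx.symm)))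
      simp [this]
  · push Not at h
    refine (ENNReal.tsum_eq_zero.2 ?_).trans_le zero_le
    rintro ⟨y, hy⟩
    have : y ∉ B := fun hyB => h y hyB hy
    simp [this]

variable (T φ) in
/-- The measure placing mass `exp (S_n φ y)` at every solution `y` of `T^[n] y = x`. -/
noncomputable def transferMeasure [MeasurableSpace X] (n : ℕ) (x : X) : Measure X :=
  Measure.sum fun y : T^[n] ⁻¹' {x} => birkhoffWeight T φ n y • Measure.dirac (y : X)

theorem transferMeasure_apply [MeasurableSpace X] (n : ℕ) (x : X) {B : Set X}
    (hB : MeasurableSet B) : transferMeasure T φ n x B = transfer T φ n (B.indicator 1) x := by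
  simp [transferMeasure, transfer, Measure.sum_apply _ hB, hB]

variable (T φ) in
/-- The probability measure on the solutions `y` of `T^[n] y = x` with masses proportional to
`exp (S_n φ y)`, provided that the partition function is positive and finite. -/
noncomputable def normalizedTransferMeasure [MeasurableSpace X] (n : ℕ) (x : X) : Measure X :=
  (transfer T φ n 1 x)⁻¹ • transferMeasure T φ n x

theorem mul_normalizedTransferMeasure_apply [MeasurableSpace X] {n : ℕ} {x : X}
    (h : transfer T φ n 1 x ≠ 0) (h' : transfer T φ n 1 x ≠ ∞) {B : Set X} (hB : MeasurableSet B) :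
    transfer T φ n 1 x * normalizedTransferMeasure T φ n x B =
      transfer T φ n (B.indicator 1) x := by
  rw [normalizedTransferMeasure, Measure.smul_apply, smul_eq_mul, ← mul_assoc,
    ENNReal.mul_inv_cancel h h', one_mul, transferMeasure_apply n x hB]

theorem isProbabilityMeasure_normalizedTransferMeasure [MeasurableSpace X] {n : ℕ} {x : X}
    (h : transfer T φ n 1 x ≠ 0) (h' : transfer T φ n 1 x ≠ ∞) :
    IsProbabilityMeasure (normalizedTransferMeasure T φ n x) := by
  refine ⟨?_⟩
  have h_univ := mul_normalizedTransferMeasure_apply h h' .univ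
  rwa [Set.indicator_univ, ENNReal.mul_eq_left h h'] at h_univ

end Transfer

section Symbolic

variable {A : Matrix (Fin l) (Fin l) ℕ}

theorem mem_cylinder_wordPrefix {ω υ : SigmaA l A} {k : ℕ} :
    υ ∈ cylinder A (wordPrefix ω k) ↔ ∀ i < k, υ.1 i = ω.1 i := by
  simp [cylinder, wordPrefix]

theorem mem_cylinder_wordPrefix_self (ω : SigmaA l A) (k : ℕ) :
    ω ∈ cylinder A (wordPrefix ω k) :=
  mem_cylinder_wordPrefix.2 fun _ _ => rfl

theorem mem_cylinder_wordPrefix_comm {ω υ : SigmaA l A} {k : ℕ} :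
    υ ∈ cylinder A (wordPrefix ω k) ↔ ω ∈ cylinder A (wordPrefix υ k) := by
  simp only [mem_cylinder_wordPrefix, eq_comm]

theorem continuous_coord (i : ℕ) : Continuous fun ω : SigmaA l A => ω.1 i :=
  (continuous_apply i).comp continuous_subtype_val

theorem isClopen_cylinder_wordPrefix (ω : SigmaA l A) (k : ℕ) :
    IsClopen (cylinder A (wordPrefix ω k)) := by
  have h_eq : cylinder A (wordPrefix ω k) =
      ⋂ i ∈ Finset.range k, (fun υ : SigmaA l A => υ.1 i) ⁻¹' {ω.1 i} := by
    ext υ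
    simp [mem_cylinder_wordPrefix]
  rw [h_eq]
  exact isClopen_biInter_finset fun i _ => (isClopen_discrete _).preimage (continuous_coord i)

instance : TopologicalSpace.MetrizableSpace (SigmaA l A) :=
  Topology.IsEmbedding.subtypeVal.metrizableSpace

instance : CompactSpace (SigmaA l A) := by
  have h_closed : IsClosed {ω : ℕ → Fin l | ∀ k, A (ω k) (ω (k + 1)) = 1} := by
    rw [Set.ofPred_forall]
    refine isClosed_iInter fun k => ?_
    exact (isClosed_discrete {p : Fin l × Fin l | A p.1 p.2 = 1}).preimage
      (f := fun ω : ℕ → Fin l => (ω k, ω (k + 1))) (by fun_prop)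
  exact isCompact_iff_compactSpace.1 h_closed.isCompact

theorem continuous_shift : Continuous (shift (A := A)) :=
  (continuous_pi fun n => continuous_coord (n + 1)).subtype_mk _

theorem iterate_shift_apply (k : ℕ) (ω : SigmaA l A) (i : ℕ) :
    (shift^[k] ω).1 i = ω.1 (i + k) := by
  induction k generalizing ω with
  | zero => rfl
  | succ k ih => exact (ih (shift ω)).trans (congrArg ω.1 (by omega))

theorem injOn_iterate_shift (ω : SigmaA l A) (k : ℕ) :
    Set.InjOn shift^[k] (cylinder A (wordPrefix ω k)) := by
  intro x hx y hy hxy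
  refine Subtype.ext (funext fun i => ?_)
  rcases lt_or_ge i k with hi | hi
  · rw [mem_cylinder_wordPrefix.1 hx i hi, mem_cylinder_wordPrefix.1 hy i hi]
  · obtain ⟨j, rfl⟩ := Nat.exists_eq_add_of_le' hi
    rw [← iterate_shift_apply, ← iterate_shift_apply, hxy]

/-- The sequence `x` with the symbol `i` put in front of it. -/
def prepend (i : Fin l) (x : SigmaA l A) (h : A i (x.1 0) = 1) : SigmaA l A :=
  ⟨fun n => Nat.casesOn n i x.1, fun k => by cases k; exacts [h, x.2 _]⟩

theorem shift_prepend (i : Fin l) (x : SigmaA l A) (h : A i (x.1 0) = 1) :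
    shift (prepend i x h) = x := rfl

theorem exists_mem_cylinder_iterate_shift_eq (ω z : SigmaA l A) (k : ℕ) (h : z.1 0 = ω.1 k) :
    ∃ y ∈ cylinder A (wordPrefix ω k), shift^[k] y = z := by
  induction k generalizing z with
  | zero => exact ⟨z, by simp [mem_cylinder_wordPrefix], rfl⟩
  | succ k ih =>
    obtain ⟨y, hy, hyz⟩ := ih (prepend (ω.1 k) z (h ▸ ω.2 k)) rfl
    refine ⟨y, mem_cylinder_wordPrefix.2 fun i hi => ?_, ?_⟩
    · rcases Nat.lt_succ_iff_lt_or_eq.1 hi with hi | rfl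
      · exact mem_cylinder_wordPrefix.1 hy i hi
      · simpa [hyz, prepend] using (iterate_shift_apply i y 0).symm
    · rw [Function.iterate_succ_apply', hyz, shift_prepend]

theorem exists_iterate_shift_eq_of_pow_pos (hA : ∀ i j, A i j = 0 ∨ A i j = 1) (n : ℕ) (a : Fin l)
    (x : SigmaA l A) (h : 0 < (A ^ n) a (x.1 0)) :
    ∃ z : SigmaA l A, z.1 0 = a ∧ shift^[n] z = x := by
  induction n generalizing a with
  | zero =>
    refine ⟨x, ?_, rfl⟩
    by_contra h_ne
    simp [Ne.symm h_ne] at h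
  | succ n ih =>
    rw [pow_succ', Matrix.mul_apply] at h
    obtain ⟨b, -, hb⟩ := Finset.exists_ne_zero_of_sum_ne_zero h.ne'
    obtain ⟨z, rfl, hzx⟩ := ih b (Nat.pos_of_ne_zero (right_ne_zero_of_mul hb))
    have h_edge : A a (z.1 0) = 1 := (hA _ _).resolve_left (left_ne_zero_of_mul hb)
    exact ⟨prepend a z h_edge, rfl, by rw [Function.iterate_succ_apply, shift_prepend, hzx]⟩

theorem Primitive.exists_mem_cylinder (hA : Primitive A) :
    ∃ N, ∀ (ω x : SigmaA l A) (k : ℕ), ∃ y ∈ cylinder A (wordPrefix ω k), shift^[N + k] y = x := by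
  obtain ⟨N, -, hN⟩ := hA.2
  refine ⟨N, fun ω x k => ?_⟩
  obtain ⟨z, hz, rfl⟩ := exists_iterate_shift_eq_of_pow_pos hA.1 N (ω.1 k) x (hN _ _)
  obtain ⟨y, hy, rfl⟩ := exists_mem_cylinder_iterate_shift_eq ω z k hz
  exact ⟨y, hy, Function.iterate_add_apply ..⟩

theorem Primitive.nonempty (hA : Primitive A) (hl : 0 < l) : Nonempty (SigmaA l A) := by
  have h_row (i : Fin l) : ∃ j, A i j = 1 := by
    obtain ⟨n, hn, h_pos⟩ := hA.2
    have h := h_pos i i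
    rw [← Nat.succ_pred_eq_of_pos hn, pow_succ', Matrix.mul_apply] at h
    obtain ⟨j, -, hj⟩ := Finset.exists_ne_zero_of_sum_ne_zero h.ne'
    exact ⟨j, (hA.1 _ _).resolve_left (left_ne_zero_of_mul hj)⟩
  choose next h_next using h_row
  refine ⟨⟨fun n => next^[n] ⟨0, hl⟩, fun k => ?_⟩⟩
  simpa only [Function.iterate_succ_apply'] using h_next _

end Symbolic

section BowenEstimates

variable {A : Matrix (Fin l) (Fin l) ℕ} {φ : SigmaA l A → ℝ}

/-- Bowen's condition: the Birkhoff sums of length `k` vary by a bounded amount on each cylinder of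
length `k`, uniformly in `k`. It is stated through cylinders instead of a metric. -/
def BowenCond (φ : SigmaA l A → ℝ) : Prop :=
  ∃ K : ℝ, ∀ (ω : SigmaA l A) (k : ℕ), ∀ υ ∈ cylinder A (wordPrefix ω k),
    |birkhoff φ k υ - birkhoff φ k ω| ≤ K

theorem HolderCont.bowenCond (hφ : HolderCont φ) : BowenCond φ := by
  obtain ⟨C, s, hs, h⟩ := hφ
  set θ : ℝ := 2 ^ (-s)
  have hθ : 0 ≤ θ := by positivity
  have hθ' : θ < 1 := Real.rpow_lt_one_of_one_lt_of_neg one_lt_two (neg_lt_zero.2 hs)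
  refine ⟨|C| * (1 - θ)⁻¹, fun ω k υ hυ => ?_⟩
  have h_term (m : ℕ) (hm : m < k) :
      |φ (shift^[m] υ) - φ (shift^[m] ω)| ≤ |C| * θ ^ (k - 1 - m) := by
    have h_agree (i : ℕ) (hi : i < k - 1 - m) : (shift^[m] υ).1 i = (shift^[m] ω).1 i := by
      rw [iterate_shift_apply, iterate_shift_apply, mem_cylinder_wordPrefix.1 hυ _ (by omega)]
    refine (h _ _ _ h_agree).trans ?_
    rw [← neg_mul, Real.rpow_mul_natCast zero_le_two]
    gcongr
    exact le_abs_self C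
  calc |birkhoff φ k υ - birkhoff φ k ω|
      ≤ ∑ m ∈ Finset.range k, |φ (shift^[m] υ) - φ (shift^[m] ω)| := by
        rw [birkhoff, birkhoff, ← Finset.sum_sub_distrib]
        exact Finset.abs_sum_le_sum_abs _ _
    _ ≤ ∑ m ∈ Finset.range k, |C| * θ ^ (k - 1 - m) :=
        Finset.sum_le_sum fun m hm => h_term m (Finset.mem_range.1 hm)
    _ = |C| * ∑ m ∈ Finset.range k, θ ^ m := by
        rw [← Finset.mul_sum, Finset.sum_range_reflect]
    _ ≤ |C| * (1 - θ)⁻¹ := by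
        rw [← tsum_geometric_of_lt_one hθ hθ']
        gcongr
        exact (summable_geometric_of_lt_one hθ hθ').sum_le_tsum _ fun m _ => by positivity

theorem birkhoffWeight_shift (φ : SigmaA l A → ℝ) (k : ℕ) (ω : SigmaA l A) :
    birkhoffWeight shift φ k ω = ENNReal.ofReal (Real.exp (birkhoff φ k ω)) := rfl

theorem BowenCond.exists_comparable_birkhoffWeight (hφ : BowenCond φ) :
    ∃ C : ℝ≥0, ∀ (ω : SigmaA l A) (k : ℕ), ∀ υ ∈ cylinder A (wordPrefix ω k),
      Comparable C (birkhoffWeight shift φ k υ) (birkhoffWeight shift φ k ω) := by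
  obtain ⟨K, hK⟩ := hφ
  exact ⟨_, fun ω k υ hυ => comparable_exp (hK ω k υ hυ)⟩

theorem BowenCond.exists_abs_birkhoff_le (hφ : BowenCond φ) (n : ℕ) :
    ∃ M : ℝ, ∀ ω, |birkhoff φ n ω| ≤ M := by
  obtain ⟨K, hK⟩ := hφ
  have h_word (w : Fin n → Fin l) :
      ∃ M : ℝ, ∀ ω : SigmaA l A, (∀ i : Fin n, ω.1 i = w i) → |birkhoff φ n ω| ≤ M := by
    by_cases h : ∃ υ : SigmaA l A, ∀ i : Fin n, υ.1 i = w i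
    · obtain ⟨υ, hυ⟩ := h
      refine ⟨|birkhoff φ n υ| + K, fun ω hω => ?_⟩
      have h_mem : ω ∈ cylinder A (wordPrefix υ n) := mem_cylinder_wordPrefix.2 fun i hi =>
        (hω ⟨i, hi⟩).trans (hυ ⟨i, hi⟩).symm
      linarith [abs_sub_abs_le_abs_sub (birkhoff φ n ω) (birkhoff φ n υ), hK υ n ω h_mem]
    · exact ⟨0, fun ω hω => (h ⟨ω, hω⟩).elim⟩
  choose M hM using h_word
  obtain ⟨M', hM'⟩ := Finite.exists_le M
  exact ⟨M', fun ω => (hM _ ω fun _ => rfl).trans (hM' fun i => ω.1 i)⟩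

theorem BowenCond.exists_comparable_birkhoffWeight_one (hφ : BowenCond φ) (n : ℕ) :
    ∃ C : ℝ≥0, ∀ ω, Comparable C (birkhoffWeight shift φ n ω) 1 := by
  obtain ⟨M, hM⟩ := hφ.exists_abs_birkhoff_le n
  refine ⟨(Real.exp M).toNNReal, fun ω => ?_⟩
  have h_abs : |birkhoff φ n ω - 0| ≤ M := by simpa using hM ω
  simpa [birkhoffWeight_shift] using comparable_exp h_abs

theorem BowenCond.exists_transfer_one_le (hφ : BowenCond φ) (n : ℕ) :
    ∃ C : ℝ≥0, ∀ x, transfer shift φ n 1 x ≤ C := by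
  obtain ⟨C, hC⟩ := hφ.exists_comparable_birkhoffWeight_one n
  refine ⟨Fintype.card (Fin n → Fin l) * C, fun x => ?_⟩
  let word (y : shift^[n] ⁻¹' {x}) (i : Fin n) : Fin l := y.1.1 i
  have h_inj : Function.Injective word := fun y y' h => Subtype.ext <|
    injOn_iterate_shift y.1 n (mem_cylinder_wordPrefix_self y.1 n)
      (mem_cylinder_wordPrefix.2 fun i hi => (congrFun h ⟨i, hi⟩).symm) (y.2.trans y'.2.symm)
  calc transfer shift φ n 1 x ≤ ∑' _y : shift^[n] ⁻¹' {x}, (C : ℝ≥0∞) :=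
        ENNReal.tsum_le_tsum fun y => by simpa using (hC y).1
    _ ≤ ∑' _w : Fin n → Fin l, (C : ℝ≥0∞) :=
        ENNReal.tsum_comp_le_tsum_of_injective h_inj fun _ => (C : ℝ≥0∞)
    _ = (Fintype.card (Fin n → Fin l) * C : ℝ≥0) := by
        rw [tsum_fintype, Finset.sum_const, Finset.card_univ]
        simp

theorem BowenCond.exists_transfer_one_le_of_zero_eq (hφ : BowenCond φ) :
    ∃ C : ℝ≥0, ∀ (n : ℕ) (x y : SigmaA l A), x.1 0 = y.1 0 →
      transfer shift φ n 1 x ≤ C * transfer shift φ n 1 y := by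
  obtain ⟨C, hC⟩ := hφ.exists_comparable_birkhoffWeight
  refine ⟨C, fun n x y hxy => ?_⟩
  have h_swap (u : shift^[n] ⁻¹' {x}) :
      ∃ v ∈ cylinder A (wordPrefix u.1 n), shift^[n] v = y := by
    refine exists_mem_cylinder_iterate_shift_eq u.1 y n ?_
    have h_zero := iterate_shift_apply n u.1 0
    rwa [Set.mem_singleton_iff.1 u.2, hxy, zero_add] at h_zero
  choose swap h_swap_mem h_swap_eq using h_swap
  have h_inj : Function.Injective fun u => (⟨swap u, h_swap_eq u⟩ : shift^[n] ⁻¹' {y}) := by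
    intro u u' h
    refine Subtype.ext <| injOn_iterate_shift (swap u) n
      (mem_cylinder_wordPrefix_comm.1 (h_swap_mem u)) ?_ (u.2.trans u'.2.symm)
    rw [Subtype.mk.inj h]
    exact mem_cylinder_wordPrefix_comm.1 (h_swap_mem u')
  simp only [transfer, Pi.one_apply, mul_one, ← ENNReal.tsum_mul_left]
  calc ∑' u : shift^[n] ⁻¹' {x}, birkhoffWeight shift φ n u
      ≤ ∑' u : shift^[n] ⁻¹' {x}, C * birkhoffWeight shift φ n (swap u) :=
        ENNReal.tsum_le_tsum fun u => (hC u n _ (h_swap_mem u)).2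
    _ ≤ ∑' v : shift^[n] ⁻¹' {y}, C * birkhoffWeight shift φ n v :=
        ENNReal.tsum_comp_le_tsum_of_injective h_inj fun v => C * birkhoffWeight shift φ n v

theorem BowenCond.exists_comparable_transfer_one (hφ : BowenCond φ) (hA : Primitive A) :
    ∃ C : ℝ≥0, ∀ n (x y : SigmaA l A),
      Comparable C (transfer shift φ n 1 x) (transfer shift φ n 1 y) := by
  obtain ⟨N, hN⟩ := hA.exists_mem_cylinder
  obtain ⟨C₁, hC₁⟩ := hφ.exists_transfer_one_le_of_zero_eq
  obtain ⟨C₂, hC₂⟩ := hφ.exists_comparable_birkhoffWeight_one (N + 1)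
  obtain ⟨C₃, hC₃⟩ := hφ.exists_transfer_one_le (N + 1)
  suffices h_le : ∀ n x y, transfer shift φ n 1 x ≤ ↑(C₁ * C₂ * C₃) * transfer shift φ n 1 y from
    ⟨_, fun n x y => ⟨h_le n x y, h_le n y x⟩⟩
  intro n x y
  obtain ⟨z, hz, rfl⟩ := hN x y 1
  have h_zero : x.1 0 = z.1 0 := (mem_cylinder_wordPrefix.1 hz 0 one_pos).symm
  calc transfer shift φ n 1 x
      ≤ C₁ * (1 * transfer shift φ n 1 z) := by rw [one_mul]; exact hC₁ n x z h_zero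
    _ ≤ C₁ * (C₂ * birkhoffWeight shift φ (N + 1) z * transfer shift φ n 1 z) := by
        gcongr
        exact (hC₂ z).2
    _ ≤ C₁ * (C₂ * transfer shift φ (N + 1) (transfer shift φ n 1) (shift^[N + 1] z)) := by
        rw [mul_assoc (C₂ : ℝ≥0∞)]
        gcongr
        exact birkhoffWeight_mul_le_transfer ..
    _ = C₁ * (C₂ * transfer shift φ n (transfer shift φ (N + 1) 1) (shift^[N + 1] z)) := by
        rw [← transfer_add, add_comm, transfer_add]
    _ ≤ C₁ * (C₂ * (C₃ * transfer shift φ n 1 (shift^[N + 1] z))) := by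
        gcongr
        exact transfer_le_const_mul (fun w => by simpa using hC₃ w) _
    _ = ↑(C₁ * C₂ * C₃) * transfer shift φ n 1 (shift^[N + 1] z) := by
        push_cast
        ring

theorem BowenCond.transfer_one_ne_top (hφ : BowenCond φ) (n : ℕ) (x : SigmaA l A) :
    transfer shift φ n 1 x ≠ ∞ := by
  obtain ⟨C, hC⟩ := hφ.exists_transfer_one_le n
  exact ne_top_of_le_ne_top ENNReal.coe_ne_top (hC x)

theorem BowenCond.transfer_one_ne_zero (hφ : BowenCond φ) (hA : Primitive A) (n : ℕ)
    (x : SigmaA l A) : transfer shift φ n 1 x ≠ 0 := by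
  obtain ⟨C, hC⟩ := hφ.exists_comparable_transfer_one hA
  have h_weight := birkhoffWeight_mul_le_transfer (T := shift) (φ := φ) n 1 x
  intro h_zero
  have h_iter := (hC n (shift^[n] x) x).1
  rw [h_zero, mul_zero] at h_iter
  exact birkhoffWeight_ne_zero shift φ n x (by simpa using h_weight.trans h_iter)

theorem BowenCond.exists_comparable_transfer_add (hφ : BowenCond φ) (hA : Primitive A) :
    ∃ C : ℝ≥0, ∀ m n (x : SigmaA l A), Comparable C (transfer shift φ (m + n) 1 x)
      (transfer shift φ m 1 x * transfer shift φ n 1 x) := by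
  obtain ⟨C, hC⟩ := hφ.exists_comparable_transfer_one hA
  refine ⟨C, fun m n x => ?_⟩
  rw [transfer_add, mul_comm, ← transfer_const_mul]
  exact comparable_transfer (fun y => by simpa using hC n y x) x

theorem BowenCond.exists_transfer_indicator_le (hφ : BowenCond φ) (N : ℕ) :
    ∃ C : ℝ≥0, ∀ (ω : SigmaA l A) k x,
      transfer shift φ (N + k) ((cylinder A (wordPrefix ω k)).indicator 1) x ≤
        C * birkhoffWeight shift φ k ω := by
  obtain ⟨C₁, hC₁⟩ := hφ.exists_comparable_birkhoffWeight
  obtain ⟨C₂, hC₂⟩ := hφ.exists_transfer_one_le N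
  refine ⟨C₁ * C₂, fun ω k x => ?_⟩
  have h_le (y) : transfer shift φ k ((cylinder A (wordPrefix ω k)).indicator 1) y ≤
      C₁ * birkhoffWeight shift φ k ω :=
    transfer_indicator_le_of_injOn (injOn_iterate_shift ω k) (fun υ hυ => (hC₁ ω k υ hυ).1) y
  calc transfer shift φ (N + k) ((cylinder A (wordPrefix ω k)).indicator 1) x
      = transfer shift φ N (transfer shift φ k ((cylinder A (wordPrefix ω k)).indicator 1)) x :=
        transfer_add ..
    _ ≤ C₁ * birkhoffWeight shift φ k ω * transfer shift φ N 1 x :=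
        transfer_le_const_mul (fun y => (h_le y).trans_eq (mul_one _).symm) x
    _ ≤ C₁ * birkhoffWeight shift φ k ω * C₂ := by
        gcongr
        exact hC₂ x
    _ = ↑(C₁ * C₂) * birkhoffWeight shift φ k ω := by
        push_cast
        ring

theorem BowenCond.exists_le_transfer_indicator (hφ : BowenCond φ) (N : ℕ) :
    ∃ C : ℝ≥0, ∀ (ω : SigmaA l A) k, ∀ y ∈ cylinder A (wordPrefix ω k),
      birkhoffWeight shift φ k ω ≤ C * transfer shift φ (N + k)
        ((cylinder A (wordPrefix ω k)).indicator 1) (shift^[N + k] y) := by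
  obtain ⟨C₁, hC₁⟩ := hφ.exists_comparable_birkhoffWeight
  obtain ⟨C₂, hC₂⟩ := hφ.exists_comparable_birkhoffWeight_one N
  refine ⟨C₁ * C₂, fun ω k y hy => ?_⟩
  calc birkhoffWeight shift φ k ω
      ≤ C₁ * (birkhoffWeight shift φ k y * 1) := by
        rw [mul_one]
        exact (hC₁ ω k y hy).2
    _ ≤ C₁ * (birkhoffWeight shift φ k y * (C₂ * birkhoffWeight shift φ N (shift^[k] y))) := by
        gcongr
        exact (hC₂ _).2
    _ = ↑(C₁ * C₂) * (birkhoffWeight shift φ (N + k) y *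
          (cylinder A (wordPrefix ω k)).indicator 1 y) := by
        rw [add_comm N, birkhoffWeight_add, Set.indicator_of_mem hy, Pi.one_apply]
        push_cast
        ring
    _ ≤ ↑(C₁ * C₂) * transfer shift φ (N + k)
          ((cylinder A (wordPrefix ω k)).indicator 1) (shift^[N + k] y) := by
        gcongr
        exact birkhoffWeight_mul_le_transfer ..

theorem BowenCond.exists_comparable_transfer_indicator (hφ : BowenCond φ) (hA : Primitive A) :
    ∃ (N : ℕ) (C : ℝ≥0), ∀ (ω : SigmaA l A) k x,
      Comparable C (transfer shift φ (N + k) ((cylinder A (wordPrefix ω k)).indicator 1) x)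
        (birkhoffWeight shift φ k ω) := by
  obtain ⟨N, hN⟩ := hA.exists_mem_cylinder
  obtain ⟨C₁, hC₁⟩ := hφ.exists_transfer_indicator_le N
  obtain ⟨C₂, hC₂⟩ := hφ.exists_le_transfer_indicator N
  refine ⟨N, max C₁ C₂, fun ω k x => ⟨(hC₁ ω k x).trans (by gcongr; exact le_max_left ..), ?_⟩⟩
  obtain ⟨y, hy, rfl⟩ := hN ω x k
  exact (hC₂ ω k y hy).trans (by gcongr; exact le_max_right ..)

-- The orbit is cut into the pieces before, inside and after the window `[j, j + n)` that `f` sees.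
theorem BowenCond.exists_comparable_transfer_comp_iterate (hφ : BowenCond φ) (hA : Primitive A) :
    ∃ C : ℝ≥0, ∀ (D : ℝ≥0) (f : SigmaA l A → ℝ≥0∞) (c : ℝ≥0∞) (n : ℕ),
      (∀ y, Comparable D (transfer shift φ n f y) c) → ∀ r j x,
        Comparable (C * D)
          (transfer shift φ n 1 x * transfer shift φ (r + (n + j)) (fun y => f (shift^[j] y)) x)
          (c * transfer shift φ (r + (n + j)) 1 x) := by
  obtain ⟨C₁, hC₁⟩ := hφ.exists_comparable_transfer_one hA
  obtain ⟨C₂, hC₂⟩ := hφ.exists_comparable_transfer_add hA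
  refine ⟨C₂ * C₂ * C₁, fun D f c n h r j x => ?_⟩
  set Zr := transfer shift φ r 1 x
  set Zn := transfer shift φ n 1 x
  set Zj := transfer shift φ j 1 x
  have h_after (y) :
      Comparable C₁ (transfer shift φ j (fun y => f (shift^[j] y)) y) (Zj * f y) := by
    have h_eq : transfer shift φ j (fun y => f (shift^[j] y)) y = f y * transfer shift φ j 1 y := by
      simpa using transfer_comp_iterate_mul (T := shift) (φ := φ) j f 1 y
    rw [h_eq, mul_comm Zj]
    exact (hC₁ j y x).mul_left (f y)
  have h_window (y) : Comparable (C₁ * D)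
      (transfer shift φ (n + j) (fun y => f (shift^[j] y)) y) (Zj * c) := by
    rw [transfer_add]
    refine (comparable_transfer h_after y).trans ?_
    rw [transfer_const_mul]
    exact (h y).mul_left Zj
  have h_before : Comparable (C₁ * D)
      (transfer shift φ (r + (n + j)) (fun y => f (shift^[j] y)) x) (Zj * c * Zr) := by
    rw [transfer_add, ← transfer_const_mul]
    exact comparable_transfer (fun y => by simpa using h_window y) x
  have h_split : Comparable (C₂ * C₂) (transfer shift φ (r + (n + j)) 1 x) (Zr * (Zn * Zj)) :=
    (hC₂ r (n + j) x).trans ((hC₂ n j x).mul_left Zr)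
  have h_total := h_before.mul_left Zn
  rw [show Zn * (Zj * c * Zr) = c * (Zr * (Zn * Zj)) by ring] at h_total
  rw [mul_assoc _ C₁]
  exact ((h_split.mul_left c).trans h_total.symm).symm

theorem BowenCond.exists_comparable_transfer_exp (hφ : BowenCond φ) (hA : Primitive A)
    (x : SigmaA l A) : ∃ (P : ℝ) (C : ℝ≥0), ∀ n : ℕ,
      Comparable C (transfer shift φ n 1 x) (ENNReal.ofReal (Real.exp (n * P))) := by
  obtain ⟨C, hC⟩ := hφ.exists_comparable_transfer_add hA
  obtain ⟨P, hP⟩ := exists_comparable_exp (fun n => hφ.transfer_one_ne_zero hA n x)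
    (fun n => hφ.transfer_one_ne_top n x) (fun m n => hC m n x)
  exact ⟨P, C, hP⟩

/-- The Gibbs weight `exp (S_k φ ω - k P)`, with values in `ℝ≥0∞` so that it can be compared with
measures. -/
noncomputable def gibbsWeight (φ : SigmaA l A → ℝ) (P : ℝ) (k : ℕ) (ω : SigmaA l A) : ℝ≥0∞ :=
  ENNReal.ofReal (Real.exp (birkhoff φ k ω - k * P))

theorem exp_mul_gibbsWeight (φ : SigmaA l A → ℝ) (P : ℝ) (k : ℕ) (ω : SigmaA l A) :
    ENNReal.ofReal (Real.exp (k * P)) * gibbsWeight φ P k ω = birkhoffWeight shift φ k ω := by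
  rw [gibbsWeight, birkhoffWeight_shift, ← ENNReal.ofReal_mul (Real.exp_pos _).le, ← Real.exp_add,
    add_sub_cancel]

theorem BowenCond.exists_comparable_gibbsWeight_mul (hφ : BowenCond φ) (hA : Primitive A)
    (x : SigmaA l A) : ∃ (P : ℝ) (N : ℕ) (C : ℝ≥0), ∀ ω k j m, N + k + j ≤ m →
      Comparable C
        (transfer shift φ m ((shift^[j] ⁻¹' cylinder A (wordPrefix ω k)).indicator 1) x)
        (gibbsWeight φ P k ω * transfer shift φ m 1 x) := by
  obtain ⟨C₁, hC₁⟩ := hφ.exists_comparable_transfer_comp_iterate hA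
  obtain ⟨N, C₂, hC₂⟩ := hφ.exists_comparable_transfer_indicator hA
  obtain ⟨P, C₃, hC₃⟩ := hφ.exists_comparable_transfer_exp hA x
  obtain ⟨C₄, hC₄⟩ : ∃ C₄ : ℝ≥0, ∀ k : ℕ, Comparable C₄ (ENNReal.ofReal (Real.exp (k * P)))
      (ENNReal.ofReal (Real.exp ((N + k : ℕ) * P))) :=
    ⟨_, fun k => comparable_exp (K := |N * P|) <| by
      rw [abs_sub_comm, Nat.cast_add, add_mul, add_sub_cancel_right]⟩
  refine ⟨P, N, C₄ * C₃ * (C₁ * C₂), fun ω k j m hm => ?_⟩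
  obtain ⟨r, rfl⟩ := Nat.exists_eq_add_of_le' hm
  set Z := transfer shift φ (r + (N + k + j)) 1 x
  set I := transfer shift φ (r + (N + k + j))
    ((shift^[j] ⁻¹' cylinder A (wordPrefix ω k)).indicator 1) x
  have h_window : Comparable (C₁ * C₂) (transfer shift φ (N + k) 1 x * I)
      (birkhoffWeight shift φ k ω * Z) :=
    hC₁ C₂ ((cylinder A (wordPrefix ω k)).indicator 1) _ (N + k) (hC₂ ω k) r j x
  have h_exp : Comparable (C₄ * C₃) (ENNReal.ofReal (Real.exp (k * P)))
      (transfer shift φ (N + k) 1 x) := (hC₄ k).trans (hC₃ (N + k)).symm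
  rw [mul_comm _ I, ← exp_mul_gibbsWeight φ P, mul_assoc] at h_window
  have h_total := (h_exp.mul_left I).trans h_window
  rw [mul_comm I] at h_total
  exact h_total.of_mul_left (by simp [Real.exp_pos]) ENNReal.ofReal_ne_top

end BowenEstimates

section GibbsMeasures

variable {A : Matrix (Fin l) (Fin l) ℕ} {φ : SigmaA l A → ℝ}

theorem isGibbs_of_forall_comparable {P : ℝ} {C : ℝ≥0} {μ : Measure (SigmaA l A)}
    [IsFiniteMeasure μ]
    (h : ∀ ω k, Comparable C (μ (cylinder A (wordPrefix ω k))) (gibbsWeight φ P k ω)) :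
    IsGibbs φ P μ := by
  refine ⟨C + 2, by linarith [C.coe_nonneg], fun ω k _ => ?_⟩
  have h_le := ENNReal.toReal_mono
    (ENNReal.mul_ne_top ENNReal.coe_ne_top ENNReal.ofReal_ne_top) (h ω k).1
  have h_ge := ENNReal.toReal_mono (by finiteness) (h ω k).2
  simp only [gibbsWeight, ENNReal.toReal_mul, ENNReal.coe_toReal,
    ENNReal.toReal_ofReal (Real.exp_pos _).le] at h_le h_ge
  rw [le_div_iff₀ (Real.exp_pos _), div_le_iff₀ (Real.exp_pos _),
    inv_mul_le_iff₀ (by positivity)]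
  constructor
  · exact h_ge.trans (by gcongr; linarith)
  · exact h_le.trans (by gcongr; linarith)

theorem BowenCond.exists_probabilityMeasure_comparable (hφ : BowenCond φ) (hA : Primitive A)
    (x : SigmaA l A) : ∃ (ν : ProbabilityMeasure (SigmaA l A)) (P : ℝ) (C : ℝ≥0), ∀ ω k j,
      Comparable C ((ν : Measure (SigmaA l A)) (shift^[j] ⁻¹' cylinder A (wordPrefix ω k)))
        (gibbsWeight φ P k ω) := by
  obtain ⟨P, N, C, hC⟩ := hφ.exists_comparable_gibbsWeight_mul hA x
  have hZ (m) := hφ.transfer_one_ne_zero hA m x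
  have hZ' (m) := hφ.transfer_one_ne_top m x
  let νs (m : ℕ) : ProbabilityMeasure (SigmaA l A) :=
    ⟨_, isProbabilityMeasure_normalizedTransferMeasure (hZ m) (hZ' m)⟩
  obtain ⟨ν, hν⟩ := exists_clusterPt_of_compactSpace (map νs atTop)
  obtain ⟨F, hF, h_lim⟩ := mapClusterPt_iff_ultrafilter.1 hν
  refine ⟨ν, P, C, fun ω k j => comparable_iff_mem_Icc.2 ?_⟩
  have h_clopen : IsClopen (shift^[j] ⁻¹' cylinder A (wordPrefix ω k)) :=
    (isClopen_cylinder_wordPrefix ω k).preimage (continuous_shift.iterate j)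
  refine measure_mem_Icc_of_tendsto h_lim h_clopen (hF ?_)
  filter_upwards [eventually_ge_atTop (N + k + j)] with m hm
  have h_mass : transfer shift φ m 1 x *
      (νs m : Measure (SigmaA l A)) (shift^[j] ⁻¹' cylinder A (wordPrefix ω k)) =
        transfer shift φ m ((shift^[j] ⁻¹' cylinder A (wordPrefix ω k)).indicator 1) x :=
    mul_normalizedTransferMeasure_apply (hZ m) (hZ' m) h_clopen.1.measurableSet
  refine comparable_iff_mem_Icc.1 (Comparable.of_mul_left (hZ m) (hZ' m) ?_)
  rw [h_mass, mul_comm]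
  exact hC ω k j m hm

end GibbsMeasures

theorem exists_invariant_gibbs_general (hl : 0 < l) (A : Matrix (Fin l) (Fin l) ℕ)
    (hA : Primitive A) (φ : SigmaA l A → ℝ) (hφ : BowenCond φ) :
    ∃ (μ : Measure (SigmaA l A)) (P : ℝ), IsProbabilityMeasure μ ∧ IsGibbs φ P μ ∧
      ∀ B : Set (SigmaA l A), MeasurableSet B → μ (shift ⁻¹' B) = μ B := by
  obtain ⟨x⟩ := hA.nonempty hl
  obtain ⟨ν, P, C, hν⟩ := hφ.exists_probabilityMeasure_comparable hA x
  obtain ⟨μ, hμ, h_mem⟩ :=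
    exists_measurePreserving_mem_Icc continuous_shift (ν : Measure (SigmaA l A))
  have h_gibbs (ω : SigmaA l A) (k : ℕ) :
      Comparable C ((μ : Measure _) (cylinder A (wordPrefix ω k))) (gibbsWeight φ P k ω) :=
    comparable_iff_mem_Icc.2 <| h_mem _ (isClopen_cylinder_wordPrefix ω k) _ _ fun j =>
      comparable_iff_mem_Icc.1 (hν ω k j)
  exact ⟨μ, P, inferInstance, isGibbs_of_forall_comparable h_gibbs,
    fun B hB => hμ.measure_preimage hB.nullMeasurableSet⟩

/-- Every Hölder continuous potential admits a `σ`-invariant Gibbs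
measure. -/
theorem exists_invariant_gibbs
    (hl : 2 ≤ l) (A : Matrix (Fin l) (Fin l) ℕ) (hA : Primitive A)
    (φ : SigmaA l A → ℝ) (hφ : HolderCont φ) :
    ∃ (μ : Measure (SigmaA l A)) (P : ℝ), IsProbabilityMeasure μ ∧ IsGibbs φ P μ ∧
      ∀ B : Set (SigmaA l A), MeasurableSet B → μ (shift ⁻¹' B) = μ B :=
  exists_invariant_gibbs_general (by omega) A hA φ hφ.bowenCond

end SFT
end
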